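/- arXiv:math/0305411 — 2 statements merged into one kernel-verified Lean document; each statement's English description precedes it below -/
import Mathlib

section
/- For every symmetric convex body K ⊂ ℝ², every real p ≥ 1, and every integer N ≥ 2, one has 𝔼 U_{K, N+1}^p ≤ 𝔼 U_{𝒫, N+1}^p, where 𝒫 is a symmetric parallelogram (the image of [-1,1]² under an invertible linear map). -/
open MeasureTheory Set

noncomputable section

variable {E : Type*} [NormedAddCommGroup E] [InnerProductSpace ℝ E]

/-- A symmetric convex body: a compact convex set with nonempty interior with `K = -K`. -/
def IsSymConvexBody (K : Set E) : Prop :=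
  IsCompact K ∧ Convex ℝ K ∧ (interior K).Nonempty ∧ K = -K

/-- `momentU n N K p = 𝔼 U_{K,N}^p`, the `p`-th moment of the normalized volume of the
convex hull of `N` independent uniform random points in `K ⊆ ℝⁿ`. -/
def momentU (n N : ℕ) (K : Set (EuclideanSpace ℝ (Fin n))) (p : ℝ) : ℝ :=
  (∫ x : Fin N → EuclideanSpace ℝ (Fin n) in {x | ∀ i, x i ∈ K},
      ((volume (convexHull ℝ (Set.range x))).toReal / (volume K).toReal) ^ p) /
    (volume K).toReal ^ N

/-- `momentV n N K p = 𝔼 V_{K,N}^p`, the `p`-th moment of the normalized volume of the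
symmetric convex hull `conv{±x₁, …, ±x_N}` of `N` independent uniform random points
in `K ⊆ ℝⁿ`. -/
def momentV (n N : ℕ) (K : Set (EuclideanSpace ℝ (Fin n))) (p : ℝ) : ℝ :=
  (∫ x : Fin N → EuclideanSpace ℝ (Fin n) in {x | ∀ i, x i ∈ K},
      ((volume (convexHull ℝ (Set.range x ∪ -Set.range x))).toReal / (volume K).toReal) ^ p) /
    (volume K).toReal ^ N

section
set_option linter.unusedSectionVars false
set_option linter.style.haveILetI false
set_option linter.deprecated false
namespace RP
variable {V W : Type*} [NormedAddCommGroup V] [NormedSpace ℝ V] [FiniteDimensional ℝ V]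
  [MeasurableSpace V] [BorelSpace V]
  [NormedAddCommGroup W] [NormedSpace ℝ W] [FiniteDimensional ℝ W]
  [MeasurableSpace W] [BorelSpace W]

/-- unnormalized moment -/
def J (μ : Measure V) (n : ℕ) (p : ℝ) (K : Set V) : ENNReal :=
  ∫⁻ x in {x : Fin n → V | ∀ i, x i ∈ K}, (μ (convexHull ℝ (range x))) ^ p
    ∂(Measure.pi fun _ => μ)

def Good (μ : Measure V) (n : ℕ) (p : ℝ) (C : ENNReal) (K : Set V) : Prop :=
  J μ n p K ≤ C * ((μ K) ^ n * (μ K) ^ p)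

lemma hull_eq {n : ℕ} (x : Fin n → V) :
    convexHull ℝ (range x) = (fun w : Fin n → ℝ => ∑ i, w i • x i) '' stdSimplex ℝ (Fin n) := by
  rw [← convexHull_basis_eq_stdSimplex]
  have := (Fintype.linearCombination ℝ x).image_convexHull
    (range fun i j : Fin n => if i = j then (1:ℝ) else 0)
  have h2 : (fun w : Fin n → ℝ => ∑ i, w i • x i) = ⇑(Fintype.linearCombination ℝ x) := by
    ext w; simp [Fintype.linearCombination_apply]
  rw [h2, this, ← range_comp]
  congr 2
  ext i; simp [Fintype.linearCombination_apply]

lemma hull_compact {n : ℕ} (x : Fin n → V) : IsCompact (convexHull ℝ (range x)) :=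
  (finite_range x).isCompact_convexHull ℝ

lemma hull_meas (μ : Measure V) [SigmaFinite μ] (n : ℕ) :
    Measurable fun x : Fin n → V => μ (convexHull ℝ (range x)) := by
  have hc : IsClosed {q : (Fin n → V) × V | q.2 ∈ convexHull ℝ (range q.1)} := by
    have h1 : IsClosed {r : stdSimplex ℝ (Fin n) × ((Fin n → V) × V) |
        ∑ i, (r.1 : Fin n → ℝ) i • r.2.1 i = r.2.2} := by
      apply isClosed_eq
      · refine continuous_finsetSum _ fun i _ => ?_
        refine Continuous.smul ?_ ?_
        · exact (continuous_apply i).comp (continuous_subtype_val.comp continuous_fst)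
        · exact (continuous_apply i).comp (continuous_fst.comp continuous_snd)
      · exact continuous_snd.comp continuous_snd
    have h2 := isClosedMap_snd_of_compactSpace _ h1
    convert h2 using 1
    ext ⟨x, z⟩
    simp only [mem_ofPred_eq, hull_eq, mem_image]
    constructor
    · rintro ⟨w, hw, h⟩
      exact ⟨(⟨w, hw⟩, (x, z)), h, rfl⟩
    · rintro ⟨⟨w, q⟩, h, rfl⟩
      exact ⟨w, w.2, h⟩
  haveI : SecondCountableTopology V := inferInstance
  exact measurable_measure_prodMk_left (ν := μ) hc.measurableSet

lemma pi_smul_measure (μ : Measure V) [SigmaFinite μ] (n : ℕ) (c : NNReal) :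
    Measure.pi (fun _ : Fin n => c • μ) = (c ^ n) • Measure.pi (fun _ : Fin n => μ) := by
  haveI : SigmaFinite (c • μ) := inferInstance
  apply Measure.pi_eq
  intro s _
  rw [Measure.smul_apply, Measure.pi_pi]
  simp only [Measure.smul_apply]
  simp_rw [show ∀ (a : ENNReal), c • a = (c : ENNReal) * a from fun _ => rfl,
    show ∀ (a : ENNReal), (c ^ n) • a = ((c ^ n : NNReal) : ENNReal) * a from fun _ => rfl]
  rw [Finset.prod_mul_distrib]
  simp

lemma pi_mset {K : Set V} (hK : MeasurableSet K) (n : ℕ) :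
    MeasurableSet {x : Fin n → V | ∀ i, x i ∈ K} := by
  have : {x : Fin n → V | ∀ i, x i ∈ K} = ⋂ i, (fun x => x i) ⁻¹' K := by ext; simp
  rw [this]
  exact MeasurableSet.iInter fun i => measurable_pi_apply i hK

/-- transfer under linear equivalences -/
lemma Good.of_image {μ : Measure V} [μ.IsAddHaarMeasure] {ν : Measure W} [ν.IsAddHaarMeasure]
    (e : V ≃L[ℝ] W) {n : ℕ} {p : ℝ} (hp : 0 ≤ p) {C : ENNReal} {K : Set V}
    (h : Good ν n p C (e '' K)) : Good μ n p C K := by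
  haveI := e.isAddHaarMeasure_map μ
  set ν' := Measure.map e μ with hν'
  obtain ⟨c, hc⟩ : ∃ c : NNReal, ν' = c • ν := ⟨_, Measure.isAddLeftInvariant_eq_smul ν' ν⟩
  let em : V ≃ᵐ W := e.toHomeomorph.toMeasurableEquiv
  have hmp : MeasurePreserving em μ ν' := ⟨em.measurable, rfl⟩
  have hmeas : ∀ s : Set V, μ s = c * ν (e '' s) := by
    intro s
    have := hmp.measure_preimage_equiv (e '' s)
    rw [hc] at this
    have h2 : em ⁻¹' (e '' s) = s := preimage_image_eq s e.injective
    rw [h2] at this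
    rw [this]; rfl
  haveI : SigmaFinite (Measure.map e μ) := inferInstance
  have hmpi : MeasurePreserving (fun (x : Fin n → V) i => em (x i)) (Measure.pi fun _ => μ)
      (Measure.pi fun _ => ν') := measurePreserving_pi _ _ fun _ => hmp
  have hJ : J μ n p K = c ^ n * (c:ENNReal) ^ p * J ν n p (e '' K) := by
    unfold J
    have h1 := hmpi.setLIntegral_comp_preimage_emb
      (MeasurableEquiv.piCongrRight fun _ : Fin n => em).measurableEmbedding
      (fun x => (c * ν (convexHull ℝ (range x)))^p) {x | ∀ i, x i ∈ e '' K}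
    have h3 : (fun (x : Fin n → V) i => em (x i)) ⁻¹' {x | ∀ i, x i ∈ e '' K}
        = {x | ∀ i, x i ∈ K} := by
      ext x
      simp only [mem_preimage, mem_ofPred_eq]
      refine forall_congr' fun i => ?_
      exact e.injective.mem_set_image
    have h4 : ∀ x : Fin n → V, (c * ν (convexHull ℝ (range fun i => em (x i)))) =
        μ (convexHull ℝ (range x)) := by
      intro x
      rw [hmeas]
      congr 2
      have := (e.toLinearEquiv.toLinearMap).image_convexHull (range x)
      rw [← range_comp] at this
      exact this.symm
    rw [h3] at h1
    simp only [h4] at h1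
    rw [h1, hc, pi_smul_measure, Measure.restrict_smul, lintegral_smul_measure]
    simp_rw [ENNReal.mul_rpow_of_nonneg _ _ hp]
    rw [lintegral_const_mul _ ((hull_meas ν n).pow_const p)]
    rw [ENNReal.smul_def, smul_eq_mul, mul_assoc]
    simp
  unfold Good at *
  rw [hJ, hmeas K]
  rw [ENNReal.mul_rpow_of_nonneg _ _ hp, mul_pow]
  calc _ ≤ (c:ENNReal) ^ n * (c:ENNReal) ^ p * (C * (ν (e '' K) ^ n * ν (e '' K) ^ p)) := by gcongr
    _ = _ := by ring

lemma Good.of_null {μ : Measure V} {n : ℕ} {p : ℝ} (hp : 0 < p) {C : ENNReal} {K : Set V}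
    (hK : Convex ℝ K) (hm : MeasurableSet K) (h : μ K = 0) : Good μ n p C K := by
  unfold Good J
  rw [setLIntegral_congr_fun (g := fun _ => 0) (pi_mset hm n)]
  · simp
  · intro x hx
    have : μ (convexHull ℝ (range x)) = 0 :=
      measure_mono_null (convexHull_min (by rintro _ ⟨i, rfl⟩; exact hx i) hK) h
    simp [this, hp]

/-- monotone limits -/
lemma Good.of_mono {μ : Measure V} [SigmaFinite μ] {n : ℕ} {p : ℝ} (hp : 0 < p) {C : ENNReal} {K : Set V}
    (A : ℕ → Set V) (hA : Monotone A) (hAK : ∀ j, A j ⊆ K) (hnull : μ (K \ ⋃ j, A j) = 0)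
    (h : ∀ j, Good μ n p C (A j)) : Good μ n p C K := by
  unfold Good J at *
  have hsub : ({x : Fin n → V | ∀ i, x i ∈ K} : Set _) ≤ᵐ[Measure.pi fun _ => μ]
      ⋃ j, {x : Fin n → V | ∀ i, x i ∈ A j} := by
    have : ∀ i : Fin n, ∀ᵐ x ∂(Measure.pi fun _ : Fin n => μ), x i ∉ K \ ⋃ j, A j := by
      intro i
      have hq := (Measure.quasiMeasurePreserving_eval (fun _ : Fin n => μ) i)
      exact hq.ae (p := fun z => z ∉ K \ ⋃ j, A j) (by
        rw [ae_iff]; simp only [not_not]; exact hnull)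
    filter_upwards [ae_all_iff.2 this] with x hx hxK
    have h1 : ∀ i, ∃ j, x i ∈ A j := by
      intro i
      have := hx i
      simp only [mem_sdiff, not_and, not_not] at this
      simpa using this (hxK i)
    choose j hj using h1
    refine mem_iUnion.2 ⟨Finset.univ.sup j, fun i => hA (Finset.le_sup (Finset.mem_univ i)) (hj i)⟩
  refine (lintegral_mono_set' hsub).trans ?_
  rw [setLIntegral_iUnion_of_directed]
  · refine iSup_le fun j => (h j).trans ?_
    gcongr <;> exact hAK j
  · exact Monotone.directed_le fun a b hab x hx i => hA hab (hx i)

end RP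
end
section
namespace RP

/-- slice length convexity -/
lemma vol_shadow {n : ℕ} (x b y : Fin n → ℝ) {s t lam mu : ℝ} (hl : 0 ≤ lam) (hm : 0 ≤ mu)
    (hlm : lam + mu = 1) (h0 : lam * s + mu * t = 0) :
    volume (convexHull ℝ (range fun i => (x i, y i))) ≤
      ENNReal.ofReal lam * volume (convexHull ℝ (range fun i => (x i + s * b i, y i))) +
      ENNReal.ofReal mu * volume (convexHull ℝ (range fun i => (x i + t * b i, y i))) := by
  set B : Set (ℝ × ℝ × ℝ) := convexHull ℝ (range fun i => (x i, b i, y i)) with hB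
  let f : ℝ → (ℝ × ℝ × ℝ) →ₗ[ℝ] ℝ × ℝ := fun t =>
    { toFun := fun z => (z.1 + t * z.2.1, z.2.2)
      map_add' := by intro a c; ext <;> simp; ring
      map_smul' := by intro a c; ext <;> simp; ring }
  have hf : ∀ t, convexHull ℝ (range fun i => (x i + t * b i, y i)) = f t '' B := by
    intro t
    rw [(f t).image_convexHull, ← range_comp]; rfl
  have hf0 : convexHull ℝ (range fun i => (x i, y i)) = f 0 '' B := by
    rw [← hf 0]; simp
  have hcomp : ∀ t, IsCompact (f t '' B) := fun t => by
    rw [← hf]; exact (finite_range _).isCompact_convexHull ℝ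
  have hconv : ∀ t, Convex ℝ (f t '' B) := fun t => by
    rw [← hf]; exact convex_convexHull _ _
  have hsl : ∀ t u, IsCompact ((fun x => (x, u)) ⁻¹' (f t '' B)) := by
    intro t u
    have : IsClosed ((fun x : ℝ => (x, u)) ⁻¹' (f t '' B)) :=
      (hcomp t).isClosed.preimage (by fun_prop)
    refine ((hcomp t).image continuous_fst).of_isClosed_subset this ?_
    intro a ha
    exact ⟨(a, u), ha, rfl⟩
  have hsc : ∀ t u, Convex ℝ ((fun x => (x, u)) ⁻¹' (f t '' B)) := by
    intro t u a ha c hc α β hα hβ hαβ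
    have := hconv t ha hc hα hβ hαβ
    simp only [mem_preimage]
    convert this using 1
    ext
    · simp
    · simp [← add_mul, hαβ]
  rw [hf0, hf, hf, Measure.volume_eq_prod, Measure.prod_apply_symm (hcomp _).measurableSet,
    Measure.prod_apply_symm (hcomp _).measurableSet, Measure.prod_apply_symm (hcomp _).measurableSet,
    ← lintegral_const_mul' _ _ ENNReal.ofReal_ne_top, ← lintegral_const_mul' _ _ ENNReal.ofReal_ne_top,
    ← lintegral_add_left]
  swap
  · exact (measurable_measure_prodMk_right (hcomp s).measurableSet).const_mul _
  refine lintegral_mono fun u => ?_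
  dsimp only
  set A0 := (fun x => (x, u)) ⁻¹' (f 0 '' B)
  rcases A0.eq_empty_or_nonempty with he | ⟨a, ha⟩
  · rw [he]; simp
  have key : ∀ a ∈ A0, ∃ a1 ∈ (fun x => (x, u)) ⁻¹' (f s '' B),
      ∃ a2 ∈ (fun x => (x, u)) ⁻¹' (f t '' B), a = lam * a1 + mu * a2 := by
    rintro a ⟨z, hz, hza⟩
    have h1 : z.1 = a := by simpa [f] using congrArg Prod.fst hza
    have h2 : z.2.2 = u := by simpa [f] using congrArg Prod.snd hza
    refine ⟨z.1 + s * z.2.1, ⟨z, hz, by simp [f, h2]⟩, z.1 + t * z.2.1, ⟨z, hz, by simp [f, h2]⟩, ?_⟩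
    rw [← h1]
    linear_combination (-z.1) * hlm - z.2.1 * h0
  have hIcc : ∀ t, ((fun x => (x, u)) ⁻¹' (f t '' B)).Nonempty → ∃ l r, l ≤ r ∧
      (fun x => (x, u)) ⁻¹' (f t '' B) = Icc l r := by
    intro t hne
    have hh := eq_Icc_of_connected_compact ⟨hne, (hsc t u).isPreconnected⟩ (hsl t u)
    refine ⟨_, _, ?_, hh⟩
    rw [hh] at hne
    exact nonempty_Icc.1 hne
  obtain ⟨a1, ha1, a2, ha2, -⟩ := key a ha
  obtain ⟨l1, r1, hlr1, e1⟩ := hIcc s ⟨a1, ha1⟩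
  obtain ⟨l2, r2, hlr2, e2⟩ := hIcc t ⟨a2, ha2⟩
  rw [e1, e2]
  have hsub : A0 ⊆ Icc (lam * l1 + mu * l2) (lam * r1 + mu * r2) := by
    intro a ha
    obtain ⟨a1, ha1, a2, ha2, rfl⟩ := key a ha
    rw [e1] at ha1
    rw [e2] at ha2
    constructor
    · have := ha1.1; have := ha2.1; gcongr
    · have := ha1.2; have := ha2.2; gcongr
  refine (measure_mono hsub).trans ?_
  rw [Real.volume_Icc, Real.volume_Icc, Real.volume_Icc, ← ENNReal.ofReal_mul hl,
    ← ENNReal.ofReal_mul hm, ← ENNReal.ofReal_add]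
  · apply le_of_eq; congr 1; ring
  · exact mul_nonneg hl (by linarith)
  · exact mul_nonneg hm (by linarith)

/-- the odd profile -/
def bb (y : ℝ) : ℝ := max (y - 1) 0 - max (-y - 1) 0

def phi (t : ℝ) (z : ℝ × ℝ) : ℝ × ℝ := (z.1 + t * bb z.2, z.2)

lemma bb_meas : Measurable bb := by unfold bb; fun_prop

lemma phi_mp (t : ℝ) : MeasurePreserving (phi t) (volume : Measure (ℝ × ℝ)) volume := by
  have h1 : MeasurePreserving (fun p : ℝ × ℝ => (id p.1, p.2 + t * bb p.1))
      (volume.prod volume) (volume.prod volume) := by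
    apply MeasurePreserving.skew_product (MeasurePreserving.id _) (g := fun a c => c + t * bb a)
    · have := bb_meas
      unfold Function.uncurry
      fun_prop
    · exact Filter.Eventually.of_forall fun a => (measurePreserving_add_right volume (t * bb a)).map_eq
  have h2 : MeasurePreserving (Prod.swap : ℝ × ℝ → ℝ × ℝ) (volume.prod volume) (volume.prod volume) :=
    Measure.measurePreserving_swap
  exact h2.comp (h1.comp h2)

end RP
end
section
namespace RP

lemma J_phi {n : ℕ} {p : ℝ} {K K1 : Set (ℝ × ℝ)} (h1 : MeasurableSet K1) {s : ℝ}
    (hs : ∀ z, z ∈ K ↔ phi s z ∈ K1) :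
    J volume n p K1 = ∫⁻ x in {x : Fin n → ℝ × ℝ | ∀ i, x i ∈ K},
      (volume (convexHull ℝ (range fun i => phi s (x i)))) ^ p ∂(Measure.pi fun _ => volume) := by
  unfold J
  have hmp : MeasurePreserving (fun (x : Fin n → ℝ × ℝ) i => phi s (x i))
      (Measure.pi fun _ => volume) (Measure.pi fun _ => volume) :=
    measurePreserving_pi _ _ fun _ => phi_mp s
  rw [← hmp.setLIntegral_comp_preimage (pi_mset h1 n) ((hull_meas volume n).pow_const p)]
  congr 2
  ext x
  simp [hs]

lemma Good.shadow {n : ℕ} {p : ℝ} (hp : 1 ≤ p) {C : ENNReal} {K K1 K2 : Set (ℝ × ℝ)}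
    (h1 : MeasurableSet K1) (h2 : MeasurableSet K2) {s t : ℝ} (hs0 : s ≤ 0) (ht0 : 0 ≤ t)
    (hs : ∀ z, z ∈ K ↔ phi s z ∈ K1) (ht : ∀ z, z ∈ K ↔ phi t z ∈ K2)
    (g1 : Good volume n p C K1) (g2 : Good volume n p C K2) : Good volume n p C K := by
  have v1 : volume K1 = volume K := by
    rw [← (phi_mp s).measure_preimage h1.nullMeasurableSet]
    congr 1; ext z; simp [hs]
  have v2 : volume K2 = volume K := by
    rw [← (phi_mp t).measure_preimage h2.nullMeasurableSet]
    congr 1; ext z; simp [ht]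
  obtain ⟨lam, mu, hl, hm, hlm, h0⟩ : ∃ lam mu : ℝ, 0 ≤ lam ∧ 0 ≤ mu ∧ lam + mu = 1 ∧
      lam * s + mu * t = 0 := by
    rcases eq_or_lt_of_le hs0 with h | h
    · exact ⟨1, 0, by simp [h]⟩
    · have : 0 < t - s := by linarith
      refine ⟨t / (t - s), -s / (t - s), by positivity, div_nonneg (by linarith) this.le, ?_, ?_⟩
      · field_simp; ring
      · field_simp; ring
  unfold Good at *
  rw [v1] at g1
  rw [v2] at g2
  have hlm' : ENNReal.ofReal lam + ENNReal.ofReal mu = 1 := by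
    rw [← ENNReal.ofReal_add hl hm, hlm, ENNReal.ofReal_one]
  have hmeas : ∀ s, Measurable fun x : Fin n → ℝ × ℝ =>
      volume (convexHull ℝ (range fun i => phi s (x i))) := by
    intro s
    refine (hull_meas volume n).comp ?_
    exact measurable_pi_lambda _ fun i => (phi_mp s).measurable.comp (measurable_pi_apply i)
  calc J volume n p K
      ≤ ∫⁻ x in {x : Fin n → ℝ × ℝ | ∀ i, x i ∈ K},
        (ENNReal.ofReal lam * (volume (convexHull ℝ (range fun i => phi s (x i)))) ^ p +
        ENNReal.ofReal mu * (volume (convexHull ℝ (range fun i => phi t (x i)))) ^ p)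
        ∂(Measure.pi fun _ => volume) := by
        unfold J
        refine lintegral_mono fun x => ?_
        refine le_trans ?_ (ENNReal.rpow_arith_mean_le_arith_mean2_rpow _ _ _ _ hlm' hp)
        refine ENNReal.rpow_le_rpow ?_ (by linarith)
        exact vol_shadow (fun i => (x i).1) (fun i => bb (x i).2) (fun i => (x i).2) hl hm hlm h0
    _ = ENNReal.ofReal lam * J volume n p K1 + ENNReal.ofReal mu * J volume n p K2 := by
        rw [lintegral_add_left (((hmeas s).pow_const p).const_mul _),
          lintegral_const_mul _ ((hmeas s).pow_const p), lintegral_const_mul _ ((hmeas t).pow_const p),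
          J_phi h1 hs, J_phi h2 ht]
    _ ≤ ENNReal.ofReal lam * (C * (volume K ^ n * volume K ^ p)) +
        ENNReal.ofReal mu * (C * (volume K ^ n * volume K ^ p)) := by gcongr
    _ = C * (volume K ^ n * volume K ^ p) := by rw [← add_mul, hlm', one_mul]
end RP
end
section
namespace RP
open Classical in
def R (Y : Finset (ℝ × ℝ)) (v : ℝ × ℝ) : Finset (ℝ × ℝ) := Y.filter (fun z => z ≠ v ∧ z ≠ -v)
def H (Y : Finset (ℝ × ℝ)) : Set (ℝ × ℝ) := convexHull ℝ (Y : Set (ℝ × ℝ))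
def Sym (Y : Finset (ℝ × ℝ)) : Prop := ∀ z ∈ Y, -z ∈ Y

lemma mem_R {Y : Finset (ℝ × ℝ)} {v z : ℝ × ℝ} : z ∈ R Y v ↔ z ∈ Y ∧ z ≠ v ∧ z ≠ -v := by
  simp [R]

lemma Sym.R {Y : Finset (ℝ × ℝ)} (h : Sym Y) (v : ℝ × ℝ) : Sym (R Y v) := by
  intro z hz
  rw [mem_R] at *
  refine ⟨h z hz.1, ?_, ?_⟩
  · rintro h2; exact hz.2.2 (by rw [← h2]; simp)
  · rintro h2; exact hz.2.1 (by simpa using h2)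

lemma card_R {Y : Finset (ℝ × ℝ)} (h : Sym Y) {v : ℝ × ℝ} (hv : v ∈ Y) (h0 : v ≠ -v) :
    (R Y v).card + 2 ≤ Y.card := by
  classical
  have h1 : R Y v ⊆ (Y.erase v).erase (-v) := by
    intro z hz
    rw [mem_R] at hz
    simp [hz.1, hz.2.1, hz.2.2]
  have h2 := Finset.card_le_card h1
  have h3 : -v ∈ Y.erase v := by simp [h v hv, Ne.symm h0]
  have h4 := Finset.card_erase_add_one h3
  have h5 := Finset.card_erase_add_one hv
  omega

lemma H_convex (Y : Finset (ℝ × ℝ)) : Convex ℝ (H Y) := convex_convexHull _ _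
lemma sub_H {Y : Finset (ℝ × ℝ)} {z : ℝ × ℝ} (h : z ∈ Y) : z ∈ H Y := subset_convexHull _ _ h
lemma H_compact (Y : Finset (ℝ × ℝ)) : IsCompact (H Y) := Y.finite_toSet.isCompact_convexHull ℝ
lemma H_min {Y : Finset (ℝ × ℝ)} {C : Set (ℝ × ℝ)} (hC : Convex ℝ C) (h : ∀ z ∈ Y, z ∈ C) :
    H Y ⊆ C := convexHull_min h hC

lemma Sym.H {Y : Finset (ℝ × ℝ)} (h : Sym Y) {z : ℝ × ℝ} (hz : z ∈ H Y) : -z ∈ H Y := by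
  have : RP.H Y ⊆ -RP.H Y := H_min (H_convex Y).neg fun z hz => by
    simpa using sub_H (h z hz)
  exact this hz

lemma conv3 {C : Set (ℝ × ℝ)} (hC : Convex ℝ C) {x y z : ℝ × ℝ} (hx : x ∈ C) (hy : y ∈ C)
    (hz : z ∈ C) {a b c : ℝ} (ha : 0 ≤ a) (hb : 0 ≤ b) (hc : 0 ≤ c) (h : a + b + c = 1) :
    a • x + b • y + c • z ∈ C := by
  have := hC.sum_mem (t := Finset.univ) (w := ![a, b, c]) (z := ![x, y, z])
    (by intro i _; fin_cases i <;> simpa) (by simp [Fin.sum_univ_three, h])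
    (by intro i _; fin_cases i <;> simpa)
  simpa [Fin.sum_univ_three] using this

lemma conv_bal {C : Set (ℝ × ℝ)} (hC : Convex ℝ C) (hs : ∀ z ∈ C, -z ∈ C) {u w : ℝ × ℝ}
    (hu : u ∈ C) (hw : w ∈ C) {a b : ℝ} (h : |a| + |b| ≤ 1) : a • u + b • w ∈ C := by
  have h0 : (0 : ℝ × ℝ) ∈ C := by
    have := hC hu (hs u hu) (a := 1/2) (b := 1/2) (by norm_num) (by norm_num) (by norm_num)
    simpa using this
  have aux : ∀ (a : ℝ) (u : ℝ × ℝ), u ∈ C → ∃ u' ∈ C, a • u = |a| • u' := by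
    intro a u hu
    rcases abs_cases a with ⟨h, _⟩ | ⟨h, _⟩
    · exact ⟨u, hu, by rw [h]⟩
    · exact ⟨-u, hs u hu, by rw [h]; simp⟩
  obtain ⟨u', hu', e1⟩ := aux a u hu
  obtain ⟨w', hw', e2⟩ := aux b w hw
  rw [e1, e2]
  have := conv3 hC hu' hw' h0 (abs_nonneg a) (abs_nonneg b) (c := 1 - |a| - |b|) (by linarith) (by ring)
  simpa using this

/-- the moving family -/
def X (K' : Set (ℝ × ℝ)) (σ κ : ℝ) : Set (ℝ × ℝ) :=
  {z | (|z.2| ≤ 1 → z ∈ K') ∧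
    (1 < z.2 → -1 + (σ + κ) * (z.2 - 1) ≤ z.1 ∧ z.1 ≤ 1 + σ * (z.2 - 1)) ∧
    (z.2 < -1 → -1 + (σ + κ) * (-z.2 - 1) ≤ -z.1 ∧ -z.1 ≤ 1 + σ * (-z.2 - 1))}

lemma X_phi (K' : Set (ℝ × ℝ)) (σ κ t : ℝ) (z : ℝ × ℝ) :
    z ∈ X K' σ κ ↔ phi t z ∈ X K' (σ + t) κ := by
  obtain ⟨x, y⟩ := z
  rcases lt_or_ge 1 y with h | h
  · have hb : bb y = y - 1 := by
      unfold bb; rw [max_eq_left (by linarith), max_eq_right (by linarith)]; ring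
    have h1 : ¬ |y| ≤ 1 := by rw [abs_of_pos (by linarith)]; linarith
    have h2 : ¬ y < -1 := by linarith
    simp only [X, phi, mem_ofPred_eq, h, h1, h2, hb]
    simp only [false_imp_iff, true_imp_iff, true_and, and_true]
    constructor <;> rintro ⟨h3, h4⟩ <;> constructor <;> linarith
  rcases lt_or_ge y (-1) with h' | h'
  · have hb : bb y = y + 1 := by
      unfold bb; rw [max_eq_right (by linarith), max_eq_left (by linarith)]; ring
    have h1 : ¬ |y| ≤ 1 := by rw [abs_of_neg (by linarith)]; linarith
    have h2 : ¬ 1 < y := by linarith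
    simp only [X, phi, mem_ofPred_eq, h', h1, h2, hb]
    simp only [false_imp_iff, true_imp_iff, true_and]
    constructor <;> rintro ⟨h3, h4⟩ <;> constructor <;> linarith
  · have hb : bb y = 0 := by
      unfold bb; rw [max_eq_right (by linarith), max_eq_right (by linarith)]; ring
    have h1 : ¬ y < -1 := by linarith
    have h2 : ¬ 1 < y := by linarith
    simp only [X, phi, mem_ofPred_eq, h1, h2, hb]
    simp

structure Pre (K' : Set (ℝ × ℝ)) (σ κ : ℝ) : Prop where
  conv : Convex ℝ K'
  sym : ∀ z ∈ K', -z ∈ K'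
  w1 : ((1, 1) : ℝ × ℝ) ∈ K'
  w2 : ((-1, 1) : ℝ × ℝ) ∈ K'
  strip : ∀ z ∈ K', |z.2| ≤ 1
  right : ∀ z ∈ K', z.1 ≤ 1 + σ * (z.2 - 1)
  left : ∀ z ∈ K', -1 + (σ + κ) * (z.2 - 1) ≤ z.1

namespace Pre
variable {K' : Set (ℝ × ℝ)} {σ κ : ℝ}

lemma s0 (P : Pre K' σ κ) : σ ≤ 0 := by
  have := P.right _ (P.sym _ P.w2); norm_num at this; linarith
lemma s1 (P : Pre K' σ κ) : 0 ≤ σ + κ := by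
  have := P.left _ (P.sym _ P.w1); norm_num at this; linarith

def D (σ κ : ℝ) (z : ℝ × ℝ) : Prop := -1 + (σ + κ) * (z.2 - 1) ≤ z.1 ∧ z.1 ≤ 1 + σ * (z.2 - 1)

lemma Xneg (P : Pre K' σ κ) {z : ℝ × ℝ} (hz : z ∈ X K' σ κ) : -z ∈ X K' σ κ := by
  obtain ⟨h1, h2, h3⟩ := hz
  refine ⟨?_, ?_, ?_⟩
  · intro h; exact P.sym _ (h1 (by simpa using h))
  · intro h; exact h3 (by simp at h; linarith)
  · intro h; simpa using h2 (by simp at h; linarith)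

lemma XD (P : Pre K' σ κ) {z : ℝ × ℝ} (hz : z ∈ X K' σ κ) : D σ κ z := by
  obtain ⟨h1, h2, h3⟩ := hz
  have := P.s0
  have := P.s1
  rcases lt_or_ge 1 z.2 with h | h
  · exact h2 h
  rcases lt_or_ge z.2 (-1) with h' | h'
  · have := h3 h'
    constructor <;> nlinarith
  · have := h1 (abs_le.2 ⟨h', h⟩)
    exact ⟨P.left _ this, P.right _ this⟩

lemma line (P : Pre K' σ κ) {z : ℝ × ℝ} (h : z.2 = 1) (hD : D σ κ z) : z ∈ K' := by
  obtain ⟨h1, h2⟩ := hD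
  rw [h] at h1 h2
  have := P.conv P.w1 P.w2 (a := (1 + z.1) / 2) (b := (1 - z.1) / 2) (by linarith) (by linarith) (by ring)
  convert this using 1
  ext <;> simp
  · ring
  · rw [h]; ring

lemma D_comb {z z' : ℝ × ℝ} (h : D σ κ z) (h' : D σ κ z') {a b : ℝ} (ha : 0 ≤ a) (hb : 0 ≤ b)
    (hab : a + b = 1) : D σ κ (a • z + b • z') := by
  obtain ⟨h1, h2⟩ := h
  obtain ⟨h3, h4⟩ := h'
  have hb' : b = 1 - a := by linarith
  subst hb'
  constructor <;> simp <;> nlinarith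

lemma cross1 (P : Pre K' σ κ) {z0 z : ℝ × ℝ} (h0 : D σ κ z0) (h01 : 1 < z0.2) (hz : |z.2| ≤ 1)
    (hD : D σ κ z) : ∃ s : ℝ, 0 ≤ s ∧ s ≤ 1 ∧ z + s • (z0 - z) ∈ K' := by
  obtain ⟨hz1, hz2⟩ := abs_le.1 hz
  have hpos : 0 < z0.2 - z.2 := by linarith
  have hs0 : 0 ≤ (1 - z.2) / (z0.2 - z.2) := div_nonneg (by linarith) hpos.le
  have hs1 : (1 - z.2) / (z0.2 - z.2) ≤ 1 := by rw [div_le_one hpos]; linarith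
  refine ⟨(1 - z.2) / (z0.2 - z.2), hs0, hs1, ?_⟩
  apply P.line
  · simp; field_simp; ring
  · have := D_comb hD h0 (sub_nonneg.2 hs1) hs0 (by ring)
    convert this using 1
    module

lemma cross (P : Pre K' σ κ) {z0 z : ℝ × ℝ} (h0 : z0 ∈ X K' σ κ) (hz : |z.2| ≤ 1)
    (hD : D σ κ z) (hD' : D σ κ (-z)) : ∃ s : ℝ, 0 ≤ s ∧ s ≤ 1 ∧ z + s • (z0 - z) ∈ K' := by
  rcases lt_or_ge 1 z0.2 with h | h
  · exact P.cross1 (P.XD h0) h hz hD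
  rcases lt_or_ge z0.2 (-1) with h' | h'
  · obtain ⟨s, h1, h2, h3⟩ := P.cross1 (P.XD (P.Xneg h0)) (by simp; linarith) (z := -z) (by simpa using hz) hD'
    refine ⟨s, h1, h2, ?_⟩
    have := P.sym _ h3
    convert this using 1
    module
  · exact ⟨1, by norm_num, le_rfl, by simpa using h0.1 (abs_le.2 ⟨h', h⟩)⟩

lemma Xconv (P : Pre K' σ κ) : Convex ℝ (X K' σ κ) := by
  intro z0 h0 z1 h1 a b ha hb hab
  set z := a • z0 + b • z1 with hz
  have hD : D σ κ z := D_comb (P.XD h0) (P.XD h1) ha hb hab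
  have hD' : D σ κ (-z) := by
    have := D_comb (P.XD (P.Xneg h0)) (P.XD (P.Xneg h1)) ha hb hab
    convert this using 1
    rw [hz]; module
  refine ⟨?_, fun _ => hD, fun _ => hD'⟩
  intro hy
  obtain ⟨s, hs0, hs1, hs⟩ := P.cross h0 hy hD hD'
  obtain ⟨s', hs0', hs1', hs'⟩ := P.cross h1 hy hD hD'
  rcases hs0.eq_or_lt with rfl | hs0
  · simpa using hs
  rcases hs0'.eq_or_lt with rfl | hs0'
  · simpa using hs'
  have hW : 0 < a * s' + b * s := by
    rcases ha.eq_or_lt with h | h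
    · have : b = 1 := by linarith
      rw [← h, this]; simpa using hs0
    · have := mul_pos h hs0'
      have := mul_nonneg hb hs0.le
      linarith
  have := P.conv hs hs' (a := a * s' / (a * s' + b * s)) (b := b * s / (a * s' + b * s))
    (by positivity) (by positivity) (by field_simp)
  convert this using 1
  have hb' : b = 1 - a := by linarith
  subst hb'
  ext
  · simp [hz]; field_simp; ring
  · simp [hz]; field_simp; ring

end Pre

open Classical in
lemma X_eq {Y' : Finset (ℝ × ℝ)} {σ κ h : ℝ} (hh : 1 < h) (hκ : κ * (h - 1) = 2)
    (P : Pre (H Y') σ κ) :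
    H (Y' ∪ {(1 + σ * (h - 1), h), -(1 + σ * (h - 1), h)}) = X (H Y') σ κ := by
  apply Subset.antisymm
  · have hv : (1 + σ * (h - 1), h) ∈ X (H Y') σ κ := by
      refine ⟨?_, ?_, ?_⟩
      · intro h1; simp only [] at h1; rw [abs_of_pos (by linarith)] at h1; linarith
      · intro _; constructor <;> simp only [] <;> linarith
      · intro h1; simp only [] at h1; linarith
    refine H_min P.Xconv ?_
    intro z hz
    simp only [Finset.mem_union, Finset.mem_insert, Finset.mem_singleton] at hz
    rcases hz with hz | rfl | rfl
    · have := P.strip z (sub_H hz)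
      obtain ⟨h1, h2⟩ := abs_le.1 this
      exact ⟨fun _ => sub_H hz, fun h => by linarith, fun h => by linarith⟩
    · exact hv
    · exact P.Xneg hv
  · set Y2 := Y' ∪ {(1 + σ * (h - 1), h), -(1 + σ * (h - 1), h)} with hY2
    have hsub : H Y' ⊆ H Y2 := convexHull_mono (Finset.coe_subset.2 Finset.subset_union_left)
    have hv : (1 + σ * (h - 1), h) ∈ H Y2 := sub_H (by simp [hY2])
    have hv' : -(1 + σ * (h - 1), h) ∈ H Y2 := sub_H (by simp [hY2])
    have key : ∀ (x y ε : ℝ), 1 < y → -1 + (σ + κ) * (y - 1) ≤ x → x ≤ 1 + σ * (y - 1) →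
        ∃ a b c : ℝ, 0 ≤ a ∧ 0 ≤ b ∧ 0 ≤ c ∧ a + b + c = 1 ∧ a - b + c * (1 + σ * (h - 1)) = x ∧
          a + b + c * h = y := by
      intro x y ε hy h1 h2
      have hc : (y - 1) / (h - 1) = κ * (y - 1) / 2 := by
        rw [div_eq_iff (by linarith)]; linear_combination (-(y - 1)/2) * hκ
      refine ⟨(1 + x - σ * (y - 1) - κ * (y - 1)) / 2, (1 + σ * (y - 1) - x) / 2,
        κ * (y - 1) / 2, by linarith, by linarith, ?_, by ring, ?_, ?_⟩
      · rw [← hc]; exact div_nonneg (by linarith) (by linarith)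
      · linear_combination (σ * (y-1) / 2) * hκ
      · linear_combination ((y-1) / 2) * hκ
    rintro ⟨x, y⟩ ⟨h1, h2, h3⟩
    simp only at h1 h2 h3
    rcases lt_or_ge 1 y with hy | hy
    · obtain ⟨a, b, c, ha, hb, hc, hs, e1, e2⟩ := key x y 0 hy (h2 hy).1 (h2 hy).2
      have := conv3 (H_convex Y2) (hsub P.w1) (hsub P.w2) hv ha hb hc hs
      convert this using 1
      ext
      · simp; linarith
      · simp; linarith
    rcases lt_or_ge y (-1) with hy' | hy'
    · obtain ⟨a, b, c, ha, hb, hc, hs, e1, e2⟩ := key (-x) (-y) 0 (by linarith) (h3 hy').1 (h3 hy').2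
      have := conv3 (H_convex Y2) (hsub (P.sym _ P.w1)) (hsub (P.sym _ P.w2)) hv' ha hb hc hs
      convert this using 1
      ext
      · simp; linarith
      · simp; linarith
    · exact hsub (h1 (abs_le.2 ⟨hy', hy⟩))

end RP
end
section
namespace RP

def NonRed (Y : Finset (ℝ × ℝ)) : Prop := ∀ u ∈ Y, u ∉ H (R Y u)

open Classical in
def im (A : (ℝ × ℝ) ≃ₗ[ℝ] (ℝ × ℝ)) (Y : Finset (ℝ × ℝ)) : Finset (ℝ × ℝ) := Y.image A

section im
variable (A : (ℝ × ℝ) ≃ₗ[ℝ] (ℝ × ℝ)) (Y : Finset (ℝ × ℝ))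

lemma mem_im {z : ℝ × ℝ} : z ∈ im A Y ↔ ∃ u ∈ Y, A u = z := by simp [im]
lemma mem_im' {z : ℝ × ℝ} : A z ∈ im A Y ↔ z ∈ Y := by simp [im]
lemma card_im : (im A Y).card = Y.card := by
  classical
  exact Finset.card_image_of_injective _ A.injective
lemma H_im : H (im A Y) = A '' H Y := by
  have := (A.toLinearMap).image_convexHull (Y : Set (ℝ × ℝ))
  unfold H im
  rw [Finset.coe_image]
  exact this.symm
lemma mem_H_im {z : ℝ × ℝ} : A z ∈ H (im A Y) ↔ z ∈ H Y := by
  rw [H_im]; exact A.injective.mem_set_image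
lemma R_im (v : ℝ × ℝ) : R (im A Y) (A v) = im A (R Y v) := by
  ext z
  obtain ⟨z, rfl⟩ := A.surjective z
  rw [mem_R, mem_im', mem_im', mem_R, ← map_neg, A.injective.ne_iff, A.injective.ne_iff]
variable {Y}
lemma Sym.im (h : Sym Y) : Sym (im A Y) := by
  intro z hz
  obtain ⟨u, hu, rfl⟩ := (mem_im A Y).1 hz
  rw [← map_neg, mem_im']; exact h u hu
lemma NonRed.im (h : NonRed Y) : NonRed (im A Y) := by
  intro z hz
  obtain ⟨u, hu, rfl⟩ := (mem_im A Y).1 hz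
  rw [R_im, mem_H_im]; exact h u hu
end im

structure Nrm (Y : Finset (ℝ × ℝ)) (v : ℝ × ℝ) : Prop where
  sym : Sym Y
  nr : NonRed Y
  w1 : ((1, 1) : ℝ × ℝ) ∈ Y
  w2 : ((-1, 1) : ℝ × ℝ) ∈ Y
  vm : v ∈ Y
  h1 : 1 < v.2
  ab : |v.1| < v.2
  strip : ∀ z ∈ R Y v, |z.2| ≤ 1

def rho : (ℝ × ℝ) ≃ₗ[ℝ] (ℝ × ℝ) where
  toFun z := (-z.1, z.2)
  invFun z := (-z.1, z.2)
  map_add' a b := by ext <;> simp; ring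
  map_smul' a b := by ext <;> simp
  left_inv a := by ext <;> simp
  right_inv a := by ext <;> simp

lemma rho_apply (x y : ℝ) : rho (x, y) = (-x, y) := rfl
lemma rho_phi (t : ℝ) (z : ℝ × ℝ) : rho (phi (-t) z) = phi t (rho z) := by
  ext <;> simp [rho, phi]; ring
lemma rho_rho (z : ℝ × ℝ) : rho (rho z) = z := by
  ext <;> simp [rho]

namespace Nrm
variable {Y : Finset (ℝ × ℝ)} {v : ℝ × ℝ}

lemma refl (N : Nrm Y v) : Nrm (im rho Y) (rho v) where
  sym := N.sym.im rho
  nr := N.nr.im rho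
  w1 := by rw [mem_im]; exact ⟨_, N.w2, by simp [rho_apply]⟩
  w2 := by rw [mem_im]; exact ⟨_, N.w1, by simp [rho_apply]⟩
  vm := by rw [mem_im']; exact N.vm
  h1 := N.h1
  ab := by simpa [rho] using N.ab
  strip := by
    rw [R_im]
    intro z hz
    obtain ⟨u, hu, rfl⟩ := (mem_im _ _).1 hz
    exact N.strip u hu

lemma right (N : Nrm Y v) {z : ℝ × ℝ} (hz : z ∈ R Y v) :
    z.1 ≤ 1 + (v.1 - 1) / (v.2 - 1) * (z.2 - 1) := by
  by_contra hcon
  push Not at hcon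
  obtain ⟨v1, h⟩ := v
  obtain ⟨p, q⟩ := z
  have hh := N.h1
  have hq := (abs_le.1 (N.strip _ hz)).2
  have hab := abs_lt.1 N.ab
  simp only at *
  obtain ⟨σ, rfl⟩ : ∃ σ, v1 = 1 + σ * (h - 1) := ⟨(v1 - 1) / (h - 1), by
    rw [div_mul_cancel₀ _ (by linarith)]; ring⟩
  have e : (1 + σ * (h - 1) - 1) / (h - 1) = σ := by
    rw [div_eq_iff (by linarith)]; ring
  rw [e] at hcon
  have hσ : σ < 1 := by nlinarith
  have hzY := (mem_R.1 hz).1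
  apply N.nr _ N.w1
  set C := H (R Y (1, 1))
  have hC : Convex ℝ C := H_convex _
  have hz' : (p, q) ∈ C := sub_H (mem_R.2 ⟨hzY, by
      rintro hh; simp only [Prod.mk.injEq] at hh; rw [hh.1, hh.2] at hcon; norm_num at hcon, by
      rintro hh; simp only [Prod.neg_mk, Prod.mk.injEq] at hh
      rw [hh.1, hh.2] at hcon; linarith⟩)
  have hv' : (1 + σ * (h - 1), h) ∈ C := sub_H (mem_R.2 ⟨N.vm, by
      rintro hh; simp only [Prod.mk.injEq] at hh; linarith, by
      rintro hh; simp only [Prod.neg_mk, Prod.mk.injEq] at hh; linarith⟩)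
  have hw2 : ((-1, 1) : ℝ × ℝ) ∈ C := sub_H (mem_R.2 ⟨N.w2, by
      rintro hh; simp only [Prod.mk.injEq] at hh; linarith, by
      rintro hh; simp only [Prod.neg_mk, Prod.mk.injEq] at hh; linarith⟩)
  have hpos : 0 < h - q := by linarith
  set xe := ((h - 1) * p + (1 - q) * (1 + σ * (h - 1))) / (h - q) with hxe
  have hxe1 : 1 < xe := by
    rw [hxe, lt_div_iff₀ hpos]
    nlinarith
  have he : (xe, (1:ℝ)) ∈ C := by
    have := hC hz' hv' (a := (h - 1) / (h - q)) (b := (1 - q) / (h - q))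
      (div_nonneg (by linarith) hpos.le) (div_nonneg (by linarith) hpos.le) (by field_simp; ring)
    convert this using 1
    ext
    · simp [hxe]; field_simp
    · simp; field_simp; ring
  have hx2 : 0 < xe + 1 := by linarith
  have := hC he hw2 (a := 2 / (xe + 1)) (b := (xe - 1) / (xe + 1))
    (by positivity) (div_nonneg (by linarith) hx2.le) (by field_simp; ring)
  convert this using 1
  ext
  · simp; field_simp; ring
  · simp; field_simp; ring

lemma left (N : Nrm Y v) {z : ℝ × ℝ} (hz : z ∈ R Y v) :
    -1 + ((v.1 - 1) / (v.2 - 1) + 2 / (v.2 - 1)) * (z.2 - 1) ≤ z.1 := by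
  have := N.refl.right (z := rho z) (by rw [R_im, mem_im']; exact hz)
  simp only [rho, LinearEquiv.coe_mk, LinearMap.coe_mk, AddHom.coe_mk] at this
  have h0 : v.2 - 1 ≠ 0 := by have := N.h1; linarith
  have e : (v.1 - 1) / (v.2 - 1) + 2 / (v.2 - 1) = - ((-v.1 - 1) / (v.2 - 1)) := by
    field_simp; ring
  rw [e]; linarith

lemma pre (N : Nrm Y v) {σ : ℝ} (hσ : (v.1 - 1) / (v.2 - 1) ≤ σ)
    (hr : ∀ z ∈ R Y v, z.1 ≤ 1 + σ * (z.2 - 1)) : Pre (H (R Y v)) σ (2 / (v.2 - 1)) := by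
  have hh := N.h1
  have hlin : ∀ (f : (ℝ × ℝ) →ₗ[ℝ] ℝ) (c : ℝ), (∀ z ∈ R Y v, f z ≤ c) → ∀ z ∈ H (R Y v), f z ≤ c := by
    intro f c h
    exact H_min (convex_halfSpace_le f.isLinear c) h
  have hst : ∀ z ∈ H (R Y v), z.2 ≤ 1 :=
    hlin (LinearMap.snd ℝ ℝ ℝ) 1 fun z hz => (abs_le.1 (N.strip z hz)).2
  refine ⟨H_convex _, fun z hz => (N.sym.R v).H hz, ?_, ?_, ?_, ?_, ?_⟩
  · refine sub_H (mem_R.2 ⟨N.w1, ?_, ?_⟩)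
    · rintro rfl; norm_num at hh
    · intro hc; have := congrArg Prod.snd hc; simp at this; linarith
  · refine sub_H (mem_R.2 ⟨N.w2, ?_, ?_⟩)
    · rintro rfl; norm_num at hh
    · intro hc; have := congrArg Prod.snd hc; simp at this; linarith
  · intro z hz
    rw [abs_le]
    refine ⟨?_, hst z hz⟩
    have := hst _ ((N.sym.R v).H hz)
    simp at this; linarith
  · intro z hz
    have := hlin (LinearMap.fst ℝ ℝ ℝ - σ • LinearMap.snd ℝ ℝ ℝ) (1 - σ) (by
      intro z hz; have := hr z hz; simp; linarith) z hz
    simp at this; linarith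
  · intro z hz
    have := hlin (-LinearMap.fst ℝ ℝ ℝ + (σ + 2 / (v.2 - 1)) • LinearMap.snd ℝ ℝ ℝ)
      (1 + (σ + 2 / (v.2 - 1))) (by
      intro z hz; have := N.left hz
      have h2 := (abs_le.1 (N.strip z hz)).2
      simp only [LinearMap.add_apply, LinearMap.neg_apply, LinearMap.smul_apply, LinearMap.fst_apply, LinearMap.snd_apply, smul_eq_mul]
      nlinarith) z hz
    simp only [LinearMap.add_apply, LinearMap.neg_apply, LinearMap.smul_apply, LinearMap.fst_apply, LinearMap.snd_apply, smul_eq_mul] at this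
    linarith

lemma endR (N : Nrm Y v) : ∃ t : ℝ, 0 ≤ t ∧ ∃ Y2 : Finset (ℝ × ℝ), Sym Y2 ∧ Y2.card < Y.card ∧
    ∀ z, z ∈ H Y ↔ phi t z ∈ H Y2 := by
  classical
  have hh := N.h1
  set σ := (v.1 - 1) / (v.2 - 1) with hσ
  set κ := 2 / (v.2 - 1) with hκ
  have hκ2 : κ * (v.2 - 1) = 2 := by rw [hκ, div_mul_cancel₀ _ (by linarith)]
  have hv : v = (1 + σ * (v.2 - 1), v.2) := by
    ext
    · simp only [hσ]; rw [div_mul_cancel₀ _ (by linarith)]; ring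
    · rfl
  have P0 := N.pre le_rfl fun z hz => N.right hz
  have hY : H Y = X (H (R Y v)) σ κ := by
    rw [← X_eq hh hκ2 P0, ← hv]
    congr 1
    ext z
    simp only [Finset.mem_union, mem_R, Finset.mem_insert, Finset.mem_singleton]
    constructor
    · intro hz; by_cases h1 : z = v <;> by_cases h2 : z = -v <;> tauto
    · rintro (h | rfl | rfl)
      · exact h.1
      · exact N.vm
      · exact N.sym _ N.vm
  have hmw2 : ((1, -1) : ℝ × ℝ) ∈ R Y v := by
    refine mem_R.2 ⟨by simpa using N.sym _ N.w2, ?_, ?_⟩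
    · rintro rfl; norm_num at hh
    · intro hc; have := congrArg Prod.snd hc; have := congrArg Prod.fst hc; have h3 := N.ab
      have h4 : v.1 = -1 := by simp at this; linarith
      have h5 : v.2 = 1 := by simp at *; linarith
      linarith
  have hmw1 : ((1, 1) : ℝ × ℝ) ∈ R Y v := by
    refine mem_R.2 ⟨N.w1, ?_, ?_⟩
    · rintro rfl; norm_num at hh
    · intro hc; have := congrArg Prod.snd hc; simp at this; linarith
  obtain ⟨zs, hzs, hmin⟩ := Finset.exists_min_image ((R Y v).filter fun z => z.2 < 1)
    (fun z => (1 - z.1) / (1 - z.2)) ⟨(1, -1), by simp [hmw2]⟩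
  rw [Finset.mem_filter] at hzs
  obtain ⟨hzsR, hzs1⟩ := hzs
  set τ := (1 - zs.1) / (1 - zs.2) with hτ
  have hτ0 : τ ≤ 0 := by
    have := hmin (1, -1) (by simp [hmw2])
    simpa using this
  have hστ : σ ≤ τ := by
    rw [hτ, le_div_iff₀ (by linarith)]
    have := N.right hzsR
    linarith
  have P1 := N.pre hστ (by
    intro z hz
    rcases (abs_le.1 (N.strip z hz)).2.eq_or_lt with h | h
    · have := N.right hz
      rw [h] at *; linarith
    · have := hmin z (by simp [hz, h])
      rw [le_div_iff₀ (by linarith)] at this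
      linarith)
  have hX := X_eq hh hκ2 P1
  set v' : ℝ × ℝ := (1 + τ * (v.2 - 1), v.2) with hv'
  refine ⟨τ - σ, by linarith, R (R Y v) (1, 1) ∪ {v', -v'}, ?_, ?_, ?_⟩
  · intro z hz
    simp only [Finset.mem_union, Finset.mem_insert, Finset.mem_singleton] at *
    rcases hz with h | rfl | rfl
    · exact Or.inl (((N.sym.R v).R _) z h)
    · right; right; rfl
    · right; left; simp
  · have h1 := card_R N.sym N.vm (by
      intro hc; have := congrArg Prod.snd hc; simp at this; linarith)
    have h2 := card_R (N.sym.R v) hmw1 (by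
      intro hc; have := congrArg Prod.snd hc; norm_num at this)
    have h3 := Finset.card_union_le (R (R Y v) (1, 1)) {v', -v'}
    have h4 : ({v', -v'} : Finset (ℝ × ℝ)).card ≤ 2 := Finset.card_le_two
    omega
  · intro z
    rw [hY, X_phi _ _ _ (τ - σ), show σ + (τ - σ) = τ by ring, ← hX]
    suffices H (R Y v ∪ {v', -v'}) = H (R (R Y v) (1, 1) ∪ {v', -v'}) by rw [this]
    set Y2 := R (R Y v) (1, 1) ∪ {v', -v'} with hY2
    have hv2 : v' ∈ H Y2 := sub_H (by simp [hY2])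
    have hv2' : -v' ∈ H Y2 := sub_H (by simp [hY2])
    have hsymY2 : Sym Y2 := by
      intro z hz
      simp only [hY2, Finset.mem_union, Finset.mem_insert, Finset.mem_singleton] at *
      rcases hz with h | rfl | rfl
      · exact Or.inl (((N.sym.R v).R _) z h)
      · right; right; rfl
      · right; left; simp
    have hzs2 : zs ∈ H Y2 := by
      apply sub_H
      rw [hY2]
      refine Finset.mem_union_left _ (mem_R.2 ⟨hzsR, ?_, ?_⟩)
      · rintro rfl; norm_num at hzs1
      · rintro rfl; norm_num at hτ; linarith
    have hw1 : ((1, 1) : ℝ × ℝ) ∈ H Y2 := by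
      have hpos : 0 < v.2 - zs.2 := by linarith
      have := H_convex Y2 hzs2 hv2 (a := (v.2 - 1) / (v.2 - zs.2)) (b := (1 - zs.2) / (v.2 - zs.2))
        (div_nonneg (by linarith) hpos.le) (div_nonneg (by linarith) hpos.le) (by field_simp; ring)
      convert this using 1
      have hz1 : zs.1 = 1 - τ * (1 - zs.2) := by
        rw [hτ, div_mul_cancel₀ _ (by linarith)]; ring
      ext
      · simp [hv', hz1]; field_simp; ring
      · simp [hv']; field_simp; ring
    apply Subset.antisymm
    · refine H_min (H_convex _) ?_
      intro z hz
      simp only [Finset.mem_union, Finset.mem_insert, Finset.mem_singleton] at hz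
      rcases hz with h | rfl | rfl
      · by_cases h1 : z = (1, 1)
        · rw [h1]; exact hw1
        by_cases h2 : z = -(1, 1)
        · rw [h2]; exact hsymY2.H hw1
        · exact sub_H (Finset.mem_union_left _ (mem_R.2 ⟨h, h1, h2⟩))
      · exact hv2
      · exact hv2'
    · apply convexHull_mono
      rw [Finset.coe_subset]
      apply Finset.union_subset_union_left
      intro z hz
      exact (mem_R.1 hz).1

lemma endL (N : Nrm Y v) : ∃ t : ℝ, t ≤ 0 ∧ ∃ Y2 : Finset (ℝ × ℝ), Sym Y2 ∧ Y2.card < Y.card ∧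
    ∀ z, z ∈ H Y ↔ phi t z ∈ H Y2 := by
  obtain ⟨t, ht, Y2, h1, h2, h3⟩ := N.refl.endR
  rw [card_im] at h2
  refine ⟨-t, by linarith, im rho Y2, h1.im rho, by rwa [card_im], ?_⟩
  intro z
  rw [← mem_H_im rho Y, h3 (rho z), ← rho_phi, ← mem_H_im rho Y2, rho_rho]

lemma good (N : Nrm Y v) {n : ℕ} {p : ℝ} (hp : 1 ≤ p) {C : ENNReal}
    (ih : ∀ Y2 : Finset (ℝ × ℝ), Sym Y2 → Y2.card < Y.card → Good volume n p C (H Y2)) :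
    Good volume n p C (H Y) := by
  obtain ⟨s, hs, Y1, a1, a2, a3⟩ := N.endL
  obtain ⟨t, ht, Y2, b1, b2, b3⟩ := N.endR
  exact Good.shadow hp (H_compact Y1).measurableSet (H_compact Y2).measurableSet hs ht a3 b3
    (ih _ a1 a2) (ih _ b1 b2)

end Nrm
end RP
end
section
namespace RP

def dt (u w : ℝ × ℝ) : ℝ := u.1 * w.2 - u.2 * w.1

lemma dt_exp (w1 w2 : ℝ × ℝ) (h : dt w1 w2 ≠ 0) (z : ℝ × ℝ) :
    z = (dt z w2 / dt w1 w2) • w1 + (dt w1 z / dt w1 w2) • w2 := by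
  have key : ∀ x A B s t : ℝ, x * dt w1 w2 = A * s + B * t →
      x = (A / dt w1 w2) * s + (B / dt w1 w2) * t := by
    intro x A B s t hx
    field_simp
    exact hx
  ext
  · simp only [Prod.fst_add, Prod.smul_fst, smul_eq_mul]
    apply key
    simp only [dt]; ring
  · simp only [Prod.snd_add, Prod.smul_snd, smul_eq_mul]
    apply key
    simp only [dt]; ring

def mkA (w1 w2 : ℝ × ℝ) (h : dt w1 w2 ≠ 0) : (ℝ × ℝ) ≃ₗ[ℝ] (ℝ × ℝ) where
  toFun z := (dt z w2 / dt w1 w2 - dt w1 z / dt w1 w2, dt z w2 / dt w1 w2 + dt w1 z / dt w1 w2)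
  invFun z := ((z.1 + z.2) / 2) • w1 + ((z.2 - z.1) / 2) • w2
  map_add' a b := by ext <;> simp [dt] <;> ring
  map_smul' a b := by ext <;> simp [dt] <;> ring
  left_inv a := by
    refine Eq.trans ?_ (dt_exp w1 w2 h a).symm
    dsimp only
    congr 2 <;> ring
  right_inv a := by
    have h1 : dt (((a.1 + a.2) / 2) • w1 + ((a.2 - a.1) / 2) • w2) w2 =
      ((a.1 + a.2) / 2) * dt w1 w2 := by simp [dt]; ring
    have h2 : dt w1 (((a.1 + a.2) / 2) • w1 + ((a.2 - a.1) / 2) • w2) =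
      ((a.2 - a.1) / 2) * dt w1 w2 := by simp [dt]; ring
    dsimp only
    rw [h1, h2, mul_div_cancel_right₀ _ h, mul_div_cancel_right₀ _ h]
    ext <;> dsimp only <;> ring

lemma mkA_apply (w1 w2 : ℝ × ℝ) (h : dt w1 w2 ≠ 0) (z : ℝ × ℝ) : mkA w1 w2 h z =
  (dt z w2 / dt w1 w2 - dt w1 z / dt w1 w2, dt z w2 / dt w1 w2 + dt w1 z / dt w1 w2) := rfl

lemma mkA1 (w1 w2 : ℝ × ℝ) (h : dt w1 w2 ≠ 0) : mkA w1 w2 h w1 = (1, 1) := by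
  rw [mkA_apply, div_self h]; simp [dt, mul_comm]
lemma mkA2 (w1 w2 : ℝ × ℝ) (h : dt w1 w2 ≠ 0) : mkA w1 w2 h w2 = (-1, 1) := by
  rw [mkA_apply, div_self h]; simp [dt, mul_comm]

lemma NonRed.bal {Y : Finset (ℝ × ℝ)} (hs : Sym Y) (hn : NonRed Y) {v u w : ℝ × ℝ} (hv : v ∈ Y)
    (hu : u ∈ R Y v) (hw : w ∈ R Y v) {a b : ℝ} (h : v = a • u + b • w) : 1 < |a| + |b| := by
  by_contra hc
  push Not at hc
  apply hn v hv
  have := conv_bal (H_convex _) (fun z hz => (hs.R v).H hz) (sub_H hu) (sub_H hw) hc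
  rwa [← h] at this

lemma R_symm {Y : Finset (ℝ × ℝ)} {v u : ℝ × ℝ} (hv : v ∈ Y) (hu : u ∈ R Y v) : v ∈ R Y u := by
  rw [mem_R] at *
  refine ⟨hv, hu.2.1.symm, ?_⟩
  rintro rfl
  exact hu.2.2 (by simp)

lemma NonRed.par {Y : Finset (ℝ × ℝ)} (hs : Sym Y) (hn : NonRed Y) {v u : ℝ × ℝ} (hv : v ∈ Y)
    (hu : u ∈ R Y v) {a : ℝ} (h : v = a • u) : False := by
  have h1 : 1 < |a| := by
    simpa using hn.bal hs hv hu hu (a := a) (b := 0) (by rw [h]; simp)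
  have ha : a ≠ 0 := by rintro rfl; simp at h1; linarith
  have h2 := hn.bal hs (mem_R.1 hu).1 (R_symm hv hu) (R_symm hv hu) (a := a⁻¹) (b := 0) (by
    rw [h]; simp [smul_smul, ha])
  simp only [abs_inv, abs_zero, add_zero] at h2
  have := inv_lt_one_of_one_lt₀ h1
  linarith

lemma select {Y : Finset (ℝ × ℝ)} (hs : Sym Y) (hn : NonRed Y) {v u u' : ℝ × ℝ} (hv : v ∈ Y)
    (hu : u ∈ R Y v) (hu' : u' ∈ R Y v) (hd : dt u u' ≠ 0) :
    ∃ w1 w2, ∃ h : dt w1 w2 ≠ 0, Nrm (im (mkA w1 w2 h) Y) (mkA w1 w2 h v) := by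
  classical
  have hsR := hs.R v
  obtain ⟨⟨w1, w2⟩, hmem, hmin⟩ := Finset.exists_min_image
    ((R Y v ×ˢ R Y v).filter fun q => dt q.1 q.2 ≠ 0 ∧ 0 ≤ dt v q.2 / dt q.1 q.2 ∧
      0 ≤ dt q.1 v / dt q.1 q.2) (fun q => dt v q.2 / dt q.1 q.2 + dt q.1 v / dt q.1 q.2) (by
      have e1 : ∃ x ∈ R Y v, dt x u' ≠ 0 ∧ 0 ≤ dt v u' / dt x u' := by
        rcases le_total 0 (dt v u' / dt u u') with h | h
        · exact ⟨u, hu, hd, h⟩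
        · have : dt (-u) u' = - dt u u' := by simp [dt]; ring
          refine ⟨-u, hsR u hu, by rw [this]; simpa, by rw [this, div_neg]; linarith⟩
      obtain ⟨x, hx, hx1, hx2⟩ := e1
      rcases le_total 0 (dt x v / dt x u') with h | h
      · exact ⟨(x, u'), by simp [hx, hu', hx1, hx2, h]⟩
      · have e2 : dt x (-u') = - dt x u' := by simp [dt]; ring
        have e3 : dt v (-u') = - dt v u' := by simp [dt]; ring
        refine ⟨(x, -u'), ?_⟩
        simp only [Finset.mem_filter, Finset.mem_product]
        refine ⟨⟨hx, hsR _ hu'⟩, ?_, ?_, ?_⟩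
        · rw [e2]; simpa
        · rw [e2, e3, neg_div_neg_eq]; exact hx2
        · rw [e2, div_neg]; linarith)
  simp only [Finset.mem_filter, Finset.mem_product] at hmem hmin
  obtain ⟨⟨hw1, hw2⟩, hd', ha0, hc0⟩ := hmem
  have hexp := dt_exp w1 w2 hd' v
  set d := dt w1 w2 with hdd
  set a := dt v w2 / d with ha
  set c := dt w1 v / d with hc
  have ha0 : 0 < a := by
    rcases ha0.eq_or_lt with h | h
    · exact (hn.par hs hv hw2 (a := c) (by rw [← h] at hexp; simpa using hexp)).elim
    · exact h
  have hc0 : 0 < c := by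
    rcases hc0.eq_or_lt with h | h
    · exact (hn.par hs hv hw1 (a := a) (by rw [← h] at hexp; simpa using hexp)).elim
    · exact h
  have hac : 1 < a + c := by
    have := hn.bal hs hv hw1 hw2 hexp
    rwa [abs_of_pos ha0, abs_of_pos hc0] at this
  have hle : ∀ z ∈ R Y v, dt z w2 / d + dt w1 z / d ≤ 1 := by
    intro z hz
    have hze := dt_exp w1 w2 hd' z
    rw [← hdd] at hze
    set p := dt z w2 / d with hp
    set q := dt w1 z / d with hq
    by_contra hcon
    push Not at hcon
    have f1 : dt w1 z = q * d := by rw [hq]; field_simp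
    have f2 : dt z w2 = p * d := by rw [hp]; field_simp
    have f3 : dt w1 v = c * d := by rw [hc]; field_simp
    have f4 : dt v w2 = a * d := by rw [ha]; field_simp
    have f5 : dt v z = (a * q - c * p) * d := by
      rw [hexp, hze, hdd]; simp [dt]; ring
    have f6 : dt z v = (c * p - a * q) * d := by
      rw [hexp, hze, hdd]; simp [dt]; ring
    by_cases hcase : 0 < q ∧ c * p ≤ a * q
    · obtain ⟨hq0, hcp⟩ := hcase
      have g1 : dt v z / dt w1 z = (a * q - c * p) / q := by
        rw [f1, f5, mul_div_mul_right _ _ hd']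
      have g2 : dt w1 v / dt w1 z = c / q := by
        rw [f1, f3, mul_div_mul_right _ _ hd']
      have := hmin (w1, z) ⟨⟨hw1, hz⟩, by rw [f1]; exact mul_ne_zero hq0.ne' hd', by
        dsimp only; rw [g1]; exact div_nonneg (by linarith) hq0.le, by
        dsimp only; rw [g2]; positivity⟩
      dsimp only at this
      rw [g1, g2, (by ring : (a * q - c * p) / q + c / q = (a * q - c * p + c) / q), le_div_iff₀ hq0] at this
      nlinarith
    · have hp0 : 0 < p ∧ a * q ≤ c * p := by
        by_cases hq0 : 0 < q
        · have : a * q < c * p := by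
            by_contra h; exact hcase ⟨hq0, by linarith⟩
          refine ⟨?_, this.le⟩
          have := mul_pos ha0 hq0
          exact pos_of_mul_pos_right (by linarith : 0 < c * p) hc0.le
        · push Not at hq0
          have hp0 : 0 < p := by linarith
          refine ⟨hp0, ?_⟩
          have := mul_nonneg ha0.le (neg_nonneg.2 hq0)
          have := mul_pos hc0 hp0
          linarith
      obtain ⟨hp0, hcp⟩ := hp0
      have g1 : dt v w2 / dt z w2 = a / p := by
        rw [f2, f4, mul_div_mul_right _ _ hd']
      have g2 : dt z v / dt z w2 = (c * p - a * q) / p := by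
        rw [f2, f6, mul_div_mul_right _ _ hd']
      have := hmin (z, w2) ⟨⟨hz, hw2⟩, by rw [f2]; exact mul_ne_zero hp0.ne' hd', by
        dsimp only; rw [g1]; positivity, by
        dsimp only; rw [g2]; exact div_nonneg (by linarith) hp0.le⟩
      dsimp only at this
      rw [g1, g2, (by ring : a / p + (c * p - a * q) / p = (a + c * p - a * q) / p), le_div_iff₀ hp0] at this
      nlinarith
  refine ⟨w1, w2, hd', ?_⟩
  constructor
  · exact hs.im _
  · exact hn.im _
  · rw [← mkA1 w1 w2 hd', mem_im']; exact (mem_R.1 hw1).1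
  · rw [← mkA2 w1 w2 hd', mem_im']; exact (mem_R.1 hw2).1
  · rw [mem_im']; exact hv
  · rw [mkA_apply]; exact hac
  · rw [mkA_apply]
    change |a - c| < a + c
    rw [abs_lt]; constructor <;> linarith
  · rw [R_im]
    intro z' hz'
    obtain ⟨z, hz, rfl⟩ := (mem_im _ _).1 hz'
    rw [mkA_apply, abs_le]
    refine ⟨?_, hle z hz⟩
    have := hle (-z) (hsR z hz)
    have k1 : dt (-z) w2 = - dt z w2 := by simp [dt]; ring
    have k2 : dt w1 (-z) = - dt w1 z := by simp [dt]; ring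
    rw [k1, k2, neg_div, neg_div] at this
    dsimp only
    linarith

open Classical in
def Q4 : Finset (ℝ × ℝ) := {(1, 1), (-1, 1), (-1, -1), (1, -1)}

lemma poly {n : ℕ} {p : ℝ} (hp : 1 ≤ p) {C : ENNReal} (hQ : Good volume n p C (H Q4)) :
    ∀ (m : ℕ) (Y : Finset (ℝ × ℝ)), Sym Y → Y.card = m → Good volume n p C (H Y) := by
  classical
  intro m
  induction m using Nat.strong_induction_on with
  | _ m ih =>
  intro Y hs hm
  have ih' : ∀ Y2 : Finset (ℝ × ℝ), Sym Y2 → Y2.card < Y.card → Good volume n p C (H Y2) :=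
    fun Y2 h1 h2 => ih _ (by omega) Y2 h1 rfl
  have hp0 : 0 < p := by linarith
  have tr : ∀ A : (ℝ × ℝ) ≃ₗ[ℝ] (ℝ × ℝ), Good volume n p C (H (im A Y)) → Good volume n p C (H Y) := by
    intro A h
    rw [H_im] at h
    exact Good.of_image A.toContinuousLinearEquiv hp0.le h
  by_cases hn : NonRed Y
  swap
  · unfold NonRed at hn
    push Not at hn
    obtain ⟨u, hu, huR⟩ := hn
    have : H Y = H (R Y u) := by
      apply Subset.antisymm
      · refine H_min (H_convex _) fun z hz => ?_
        by_cases h1 : z = u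
        · rw [h1]; exact huR
        by_cases h2 : z = -u
        · rw [h2]; exact (hs.R u).H huR
        · exact sub_H (mem_R.2 ⟨hz, h1, h2⟩)
      · apply convexHull_mono
        rw [Finset.coe_subset]
        intro z hz; exact (mem_R.1 hz).1
    rw [this]
    apply ih' _ (hs.R u)
    apply Finset.card_lt_card
    refine ⟨fun z hz => (mem_R.1 hz).1, fun h => ?_⟩
    exact (mem_R.1 (h hu)).2.1 rfl
  by_cases hd : ∃ u ∈ Y, ∃ u' ∈ Y, dt u u' ≠ 0
  swap
  · push Not at hd
    apply Good.of_null hp0 (H_convex Y) (H_compact Y).measurableSet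
    obtain ⟨f, hf, hf0⟩ : ∃ f : (ℝ × ℝ) →ₗ[ℝ] ℝ, f ≠ 0 ∧ ∀ z ∈ Y, f z = 0 := by
      by_cases h : ∃ u ∈ Y, u ≠ 0
      · obtain ⟨u, hu, hu0⟩ := h
        refine ⟨u.1 • LinearMap.snd ℝ ℝ ℝ - u.2 • LinearMap.fst ℝ ℝ ℝ, ?_, ?_⟩
        · intro h
          apply hu0
          have h1 := congrArg (fun g => g ((1, 0) : ℝ × ℝ)) h
          have h2 := congrArg (fun g => g ((0, 1) : ℝ × ℝ)) h
          simp at h1 h2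
          ext <;> simp [h1, h2]
        · intro z hz
          have := hd u hu z hz
          simpa [dt] using this
      · push Not at h
        refine ⟨LinearMap.fst ℝ ℝ ℝ, ?_, fun z hz => by rw [h z hz]; simp⟩
        intro h
        have h1 := congrArg (fun g => g ((1, 0) : ℝ × ℝ)) h
        simp at h1
    refine measure_mono_null ?_ (Measure.addHaar_submodule volume (LinearMap.ker f) ?_)
    · refine H_min (Submodule.convex _) ?_
      intro z hz
      exact hf0 z hz
    · intro h; exact hf (LinearMap.ker_eq_top.1 h)
  obtain ⟨u, hu, u', hu', hd⟩ := hd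
  by_cases hv : ∃ v ∈ Y, v ≠ u ∧ v ≠ -u ∧ v ≠ u' ∧ v ≠ -u'
  · obtain ⟨v, hv, h1, h2, h3, h4⟩ := hv
    obtain ⟨w1, w2, h, N⟩ := select hs hn hv (u := u) (u' := u')
      (mem_R.2 ⟨hu, h1.symm, fun h => h2 (by rw [h]; simp)⟩)
      (mem_R.2 ⟨hu', h3.symm, fun h => h4 (by rw [h]; simp)⟩) hd
    apply tr (mkA w1 w2 h)
    apply N.good hp
    intro Y2 k1 k2
    rw [card_im] at k2
    exact ih' Y2 k1 k2
  · apply tr (mkA u u' hd)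
    have : im (mkA u u' hd) Y = Q4 := by
      ext z
      simp only [mem_im, Q4, Finset.mem_insert, Finset.mem_singleton]
      constructor
      · rintro ⟨x, hx, rfl⟩
        by_cases k1 : x = u
        · rw [k1, mkA1]; simp
        by_cases k2 : x = -u
        · rw [k2, map_neg, mkA1]; simp
        by_cases k3 : x = u'
        · rw [k3, mkA2]; simp
        by_cases k4 : x = -u'
        · rw [k4, map_neg, mkA2]; simp
        exact (hv ⟨x, hx, k1, k2, k3, k4⟩).elim
      · rintro (rfl | rfl | rfl | rfl)
        · exact ⟨u, hu, mkA1 _ _ _⟩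
        · exact ⟨u', hu', mkA2 _ _ _⟩
        · exact ⟨-u, hs u hu, by rw [map_neg, mkA1]; simp⟩
        · exact ⟨-u', hs u' hu', by rw [map_neg, mkA2]; simp⟩
    rw [this]; exact hQ

lemma body {n : ℕ} {p : ℝ} (hp : 1 ≤ p) {C : ENNReal} (hQ : Good volume n p C (H Q4))
    {K : Set (ℝ × ℝ)} (hc : Convex ℝ K) (hsym : ∀ z ∈ K, -z ∈ K) :
    Good volume n p C K := by
  classical
  have hloc : ∀ x : interior K, ∃ F : Finset (ℝ × ℝ), (F : Set (ℝ × ℝ)) ⊆ K ∧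
      x.1 ∈ interior (convexHull ℝ (F : Set (ℝ × ℝ))) := by
    rintro ⟨x, hx⟩
    obtain ⟨b, hb1, hb2⟩ := exists_mem_interior_convexHull_affineBasis (mem_interior_iff_mem_nhds.1 hx)
    have hfin : (range b).Finite := by
      have := b.finite
      exact finite_range b
    refine ⟨hfin.toFinset, ?_, ?_⟩
    · simpa using (subset_convexHull ℝ _).trans hb2
    · simpa using hb1
  choose F hFK hF using hloc
  obtain ⟨T, hT, hTU⟩ := TopologicalSpace.isOpen_iUnion_countable
    (fun x : interior K => interior (convexHull ℝ (F x : Set (ℝ × ℝ)))) (fun _ => isOpen_interior)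
  have hcov : interior K ⊆ ⋃ i ∈ T, interior (convexHull ℝ (F i : Set (ℝ × ℝ))) := by
    rw [hTU]
    intro x hx
    exact mem_iUnion.2 ⟨⟨x, hx⟩, hF ⟨x, hx⟩⟩
  have hfr : volume (K \ interior K) = 0 :=
    measure_mono_null (sdiff_subset_sdiff_left subset_closure) (hc.addHaar_frontier volume)
  rcases T.eq_empty_or_nonempty with hTe | hTne
  · apply Good.of_mono (by linarith) (fun _ => H ∅) monotone_const (by simp [H]) _
      (fun _ => poly hp hQ _ ∅ (by simp [Sym]) rfl)
    have : interior K = ∅ := by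
      rw [hTe] at hcov; simpa [subset_empty_iff] using hcov
    rw [this] at hfr
    simpa [H] using hfr
  obtain ⟨g, hg⟩ := hT.exists_eq_range hTne
  let Y : ℕ → Finset (ℝ × ℝ) := fun j =>
    (Finset.range (j + 1)).biUnion fun i => F (g i) ∪ (F (g i)).image (fun z => -z)
  have hYm : Monotone Y := by
    intro a b hab
    apply Finset.biUnion_subset_biUnion_of_subset_left
    intro i hi
    simp at *; omega
  have hYs : ∀ j, Sym (Y j) := by
    intro j z hz
    simp only [Y, Finset.mem_biUnion, Finset.mem_union, Finset.mem_image] at *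
    obtain ⟨i, hi, h⟩ := hz
    refine ⟨i, hi, ?_⟩
    rcases h with h | ⟨a, ha, rfl⟩
    · exact Or.inr ⟨z, h, rfl⟩
    · left; simpa
  apply Good.of_mono (by linarith) (fun j => H (Y j))
  · intro a b hab
    exact convexHull_mono (Finset.coe_subset.2 (hYm hab))
  · intro j
    refine H_min hc ?_
    intro z hz
    simp only [Y, Finset.mem_biUnion, Finset.mem_union, Finset.mem_image] at hz
    obtain ⟨i, hi, h⟩ := hz
    rcases h with h | ⟨a, ha, rfl⟩
    · exact hFK _ h
    · exact hsym _ (hFK _ ha)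
  · refine measure_mono_null (sdiff_subset_sdiff_right ?_) hfr
    intro x hx
    obtain ⟨i, hi, hxi⟩ := mem_iUnion₂.1 (hcov hx)
    rw [hg] at hi
    obtain ⟨j, rfl⟩ := hi
    refine mem_iUnion.2 ⟨j, ?_⟩
    refine convexHull_mono ?_ (interior_subset hxi)
    intro z hz
    simp only [Y, Finset.mem_coe, Finset.mem_biUnion, Finset.mem_union]
    exact ⟨j, by simp, Or.inl hz⟩
  · intro j
    exact poly hp hQ _ _ (hYs j) rfl
end RP
end
namespace RP

lemma H_Q4 : H Q4 = Icc (-1 : ℝ) 1 ×ˢ Icc (-1 : ℝ) 1 := by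
  have h1 : ((Q4 : Finset (ℝ × ℝ)) : Set (ℝ × ℝ)) = ({-1, 1} : Set ℝ) ×ˢ ({-1, 1} : Set ℝ) := by
    ext ⟨a, b⟩
    simp only [Q4, Finset.coe_insert, Finset.coe_singleton, mem_insert_iff, mem_singleton_iff,
      Prod.mk.injEq, mem_prod]
    tauto
  unfold H
  rw [h1, convexHull_prod, convexHull_pair, segment_eq_Icc (by norm_num)]

lemma moment_eq {n : ℕ} {p : ℝ} (hp : 0 ≤ p) (K : Set (EuclideanSpace ℝ (Fin 2)))
    (hK : IsCompact K) :
    momentU 2 n K p = (J volume n p K).toReal / ((volume K).toReal ^ n * (volume K).toReal ^ p) := by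
  unfold momentU J
  simp_rw [Real.div_rpow ENNReal.toReal_nonneg ENNReal.toReal_nonneg]
  rw [integral_div]
  simp_rw [ENNReal.toReal_rpow]
  rw [integral_toReal, div_div, volume_pi, mul_comm ((volume K ^ p).toReal)]
  · exact ((hull_meas volume n).pow_const p).aemeasurable
  · refine ae_of_all _ fun x => ?_
    exact ENNReal.rpow_lt_top_of_nonneg hp (hull_compact x).measure_lt_top.ne

lemma J_fin {n : ℕ} {p : ℝ} (hp : 0 ≤ p) (K : Set (EuclideanSpace ℝ (Fin 2)))
    (hK : IsCompact K) (hc : Convex ℝ K) : J volume n p K ≠ ⊤ := by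
  unfold J
  have hb := hK.measure_lt_top (μ := volume)
  have : ∫⁻ x in {x : Fin n → EuclideanSpace ℝ (Fin 2) | ∀ i, x i ∈ K},
      (volume (convexHull ℝ (range x))) ^ p ∂(Measure.pi fun _ => volume) ≤
      ∫⁻ x in {x : Fin n → EuclideanSpace ℝ (Fin 2) | ∀ i, x i ∈ K},
      (volume K) ^ p ∂(Measure.pi fun _ => volume) := by
    refine setLIntegral_mono' (pi_mset hK.measurableSet n) fun x hx => ?_
    gcongr
    exact convexHull_min (by rintro _ ⟨i, rfl⟩; exact hx i) hc
  refine (this.trans_lt ?_).ne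
  rw [setLIntegral_const]
  have h2 : {x : Fin n → EuclideanSpace ℝ (Fin 2) | ∀ i, x i ∈ K} = Set.pi univ fun _ => K := by
    ext; simp
  rw [h2, Measure.pi_pi]
  refine ENNReal.mul_lt_top (ENNReal.rpow_lt_top_of_nonneg hp hb.ne) ?_
  exact ENNReal.prod_lt_top fun _ _ => hb

end RP

theorem momentU_le_parallelogram
    (K : Set (EuclideanSpace ℝ (Fin 2))) (hK : IsSymConvexBody K)
    (p : ℝ) (hp : 1 ≤ p) (N : ℕ) (hN : 2 ≤ N)
    (L : EuclideanSpace ℝ (Fin 2) ≃ₗ[ℝ] EuclideanSpace ℝ (Fin 2))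
    (P : Set (EuclideanSpace ℝ (Fin 2)))
    (hP : P = L '' {x | ∀ i, x i ∈ Set.Icc (-1 : ℝ) 1}) :
    momentU 2 (N + 1) K p ≤ momentU 2 (N + 1) P p := by
  obtain ⟨hKc, hKx, hKi, hKs⟩ := hK
  have hp0 : 0 ≤ p := by linarith
  let e0 : (ℝ × ℝ) ≃ₗ[ℝ] EuclideanSpace ℝ (Fin 2) :=
    ((LinearEquiv.finTwoArrow ℝ ℝ).symm.trans (WithLp.linearEquiv 2 ℝ (Fin 2 → ℝ)).symm)
  let e : (ℝ × ℝ) ≃L[ℝ] EuclideanSpace ℝ (Fin 2) := (e0.trans L).toContinuousLinearEquiv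
  have he0 : e0 '' (Icc (-1 : ℝ) 1 ×ˢ Icc (-1 : ℝ) 1) = {x | ∀ i, x i ∈ Set.Icc (-1 : ℝ) 1} := by
    ext x
    constructor
    · rintro ⟨z, hz, rfl⟩
      intro i
      fin_cases i
      · exact hz.1
      · exact hz.2
    · intro hx
      refine ⟨(x 0, x 1), ⟨hx 0, hx 1⟩, ?_⟩
      ext i
      fin_cases i <;> rfl
  have heP : e '' (Icc (-1 : ℝ) 1 ×ˢ Icc (-1 : ℝ) 1) = P := by
    rw [hP, ← he0, image_image]; rfl
  have hPc : IsCompact P := by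
    rw [← heP]; exact (isCompact_Icc.prod isCompact_Icc).image e.continuous
  have hPx : Convex ℝ P := by
    rw [← heP]
    exact ((convex_Icc _ _).prod (convex_Icc _ _)).linear_image e.toLinearEquiv.toLinearMap
  have hPi : (interior P).Nonempty := by
    refine ⟨e (0, 0), interior_maximal (t := e '' (Ioo (-1 : ℝ) 1 ×ˢ Ioo (-1 : ℝ) 1)) ?_ ?_
      ⟨(0, 0), by simp, rfl⟩⟩
    · rw [← heP]
      exact image_mono (prod_mono Ioo_subset_Icc_self Ioo_subset_Icc_self)
    · exact e.toHomeomorph.isOpenMap _ (isOpen_Ioo.prod isOpen_Ioo)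
  have hv : ∀ A : Set (EuclideanSpace ℝ (Fin 2)), (interior A).Nonempty → volume A ≠ 0 :=
    fun A hA => (Measure.measure_pos_of_nonempty_interior volume hA).ne'
  have hP0 := hv P hPi
  have hK0 := hv K hKi
  have hP1 : volume P ≠ ⊤ := hPc.measure_lt_top.ne
  have hK1 : volume K ≠ ⊤ := hKc.measure_lt_top.ne
  have hD : ∀ A : Set (EuclideanSpace ℝ (Fin 2)), volume A ≠ 0 → volume A ≠ ⊤ →
      (volume A ^ (N + 1) * volume A ^ p ≠ 0 ∧ volume A ^ (N + 1) * volume A ^ p ≠ ⊤) := by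
    intro A h0 h1
    exact ⟨mul_ne_zero (pow_ne_zero _ h0) (ENNReal.rpow_pos (pos_iff_ne_zero.2 h0) h1).ne',
      ENNReal.mul_ne_top (ENNReal.pow_ne_top h1) (ENNReal.rpow_ne_top_of_nonneg hp0 h1)⟩
  obtain ⟨dP0, dP1⟩ := hD P hP0 hP1
  obtain ⟨dK0, dK1⟩ := hD K hK0 hK1
  set C : ENNReal := RP.J volume (N + 1) p P / (volume P ^ (N + 1) * volume P ^ p) with hC
  have hCf : C ≠ ⊤ := ENNReal.div_ne_top (RP.J_fin hp0 P hPc hPx) dP0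
  have gP : RP.Good volume (N + 1) p C P := by
    unfold RP.Good
    rw [hC, ENNReal.div_mul_cancel dP0 dP1]
  have gQ : RP.Good volume (N + 1) p C (RP.H RP.Q4) := by
    apply RP.Good.of_image (ν := volume) e hp0
    rw [RP.H_Q4, heP]; exact gP
  have gK : RP.Good volume (N + 1) p C K := by
    apply RP.Good.of_image (ν := volume) e.symm hp0
    apply RP.body hp gQ
    · exact hKx.linear_image e.symm.toLinearEquiv.toLinearMap
    · rintro _ ⟨z, hz, rfl⟩
      refine ⟨-z, ?_, map_neg _ _⟩
      rw [hKs] at hz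
      exact hz
  have hle : RP.J volume (N + 1) p K / (volume K ^ (N + 1) * volume K ^ p) ≤ C :=
    ENNReal.div_le_of_le_mul gK
  have := ENNReal.toReal_mono hCf hle
  rw [RP.moment_eq hp0 K hKc, RP.moment_eq hp0 P hPc]
  rw [hC] at this
  simpa only [ENNReal.toReal_div, ENNReal.toReal_mul, ENNReal.toReal_pow, ENNReal.toReal_rpow]
    using this
end
end

section
/- For every symmetric convex body K ⊂ ℝ², every real p ≥ 1, and every integer N ≥ 2, one has 𝔼 V_{K, N}^p ≤ 𝔼 V_{𝒫, N}^p, where 𝒫 is a symmetric parallelogram (the image of [-1,1]² under an invertible linear map). -/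
open MeasureTheory Set

noncomputable section

variable {E : Type*} [NormedAddCommGroup E] [InnerProductSpace ℝ E]

set_option linter.unusedSectionVars false
namespace SP

/-- The symmetric hull of finitely many points, as an image of the `ℓ¹`-ball. -/
def GG {E : Type*} [AddCommGroup E] [Module ℝ E] {N : ℕ} (x : Fin N → E) : Set E :=
  (fun c : Fin N → ℝ => ∑ i, c i • x i) '' {c | ∑ i, |c i| ≤ 1}

lemma convex_ball (N : ℕ) : Convex ℝ {c : Fin N → ℝ | ∑ i, |c i| ≤ 1} := by
  intro x hx y hy a b ha hb hab
  simp only [mem_setOf_eq] at *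
  calc ∑ i, |(a • x + b • y) i| ≤ ∑ i, (a * |x i| + b * |y i|) := by
        refine Finset.sum_le_sum fun i _ => ?_
        simp only [Pi.add_apply, Pi.smul_apply, smul_eq_mul]
        refine (abs_add_le _ _).trans ?_
        rw [abs_mul, abs_mul, abs_of_nonneg ha, abs_of_nonneg hb]
    _ = a * ∑ i, |x i| + b * ∑ i, |y i| := by
        rw [Finset.sum_add_distrib, Finset.mul_sum, Finset.mul_sum]
    _ ≤ a * 1 + b * 1 := by gcongr
    _ = 1 := by linarith

lemma compact_ball (N : ℕ) : IsCompact {c : Fin N → ℝ | ∑ i, |c i| ≤ 1} := by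
  refine Metric.isCompact_of_isClosed_isBounded ?_ ?_
  · exact isClosed_le (by fun_prop) (by fun_prop)
  · refine (Metric.isBounded_closedBall (x := (0 : Fin N → ℝ)) (r := 1)).subset ?_
    intro c hc
    rw [mem_closedBall_zero_iff, pi_norm_le_iff_of_nonneg zero_le_one]
    intro i
    exact (Finset.single_le_sum (f := fun i => |c i|) (fun i _ => abs_nonneg _)
      (Finset.mem_univ i)).trans hc

lemma convex_GG {E : Type*} [AddCommGroup E] [Module ℝ E] {N : ℕ} (x : Fin N → E) :
    Convex ℝ (GG x) := by
  have := (convex_ball N).linear_image (Fintype.linearCombination ℝ x)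
  have h2 : GG x = Fintype.linearCombination ℝ x '' {c | ∑ i, |c i| ≤ 1} := by
    unfold GG
    congr 1
  rw [h2]
  exact this

lemma hull_eq {E : Type*} [AddCommGroup E] [Module ℝ E] {N : ℕ} (hN : 1 ≤ N) (x : Fin N → E) :
    convexHull ℝ (range x ∪ -range x) = GG x := by
  classical
  apply Subset.antisymm
  · refine convexHull_min ?_ (convex_GG x)
    have key : ∀ i, ∀ s : ℝ, |s| ≤ 1 → s • x i ∈ GG x := by
      intro i s hs
      refine ⟨Pi.single i s, ?_, ?_⟩
      · simp only [mem_setOf_eq]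
        rw [Finset.sum_eq_single i] <;> simp +contextual [hs]
      · simp only
        rw [Finset.sum_eq_single i] <;> simp +contextual
    rintro y (⟨i, rfl⟩ | ⟨i, hi⟩)
    · simpa using key i 1 (by simp)
    · have := key i (-1) (by simp)
      rw [hi] at this
      simpa using this
  · rintro _ ⟨c, hc, rfl⟩
    simp only [mem_setOf_eq] at hc
    set S := convexHull ℝ (range x ∪ -range x) with hS
    have hconv : Convex ℝ S := convex_convexHull _ _
    have h1 : ∀ i, x i ∈ S := fun i => subset_convexHull _ _ (Or.inl ⟨i, rfl⟩)
    have h2 : ∀ i, - x i ∈ S := fun i => subset_convexHull _ _ (Or.inr (by simp))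
    have h0 : (0 : E) ∈ S := by
      have := hconv (h1 ⟨0, hN⟩) (h2 ⟨0, hN⟩) (a := 1/2) (b := 1/2) (by norm_num) (by norm_num) (by norm_num)
      simpa using this
    rcases eq_or_lt_of_le (Finset.sum_nonneg (fun i (_ : i ∈ Finset.univ) => abs_nonneg (c i))) with h | h
    · have : ∀ i, c i = 0 := by
        intro i
        have := (Finset.sum_eq_zero_iff_of_nonneg (fun i (_ : i ∈ Finset.univ) => abs_nonneg (c i))).1 h.symm i (Finset.mem_univ i)
        simpa using this
      simpa [this] using h0
    · set s := ∑ i, |c i| with hs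
      have hz : ∀ i, ∃ z ∈ S, c i • x i = |c i| • z := by
        intro i
        rcases abs_choice (c i) with h | h
        · exact ⟨x i, h1 i, by rw [h]⟩
        · exact ⟨-x i, h2 i, by rw [h]; simp⟩
      choose z hzS hz using hz
      have : ∑ i, (|c i| / s) • z i ∈ S := by
        refine hconv.sum_mem (fun i _ => by positivity) ?_ (fun i _ => hzS i)
        rw [← Finset.sum_div, ← hs, div_self h.ne']
      have := hconv.smul_mem_of_zero_mem h0 this ⟨h.le, hc⟩
      convert this using 1
      rw [Finset.smul_sum]
      refine Finset.sum_congr rfl fun i _ => ?_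
      rw [hz i, smul_smul, mul_div_cancel₀ _ h.ne']

section meas
variable {E F : Type*} [NormedAddCommGroup E] [NormedSpace ℝ E] [FiniteDimensional ℝ E]
  [MeasurableSpace E] [BorelSpace E]
  [NormedAddCommGroup F] [NormedSpace ℝ F] [FiniteDimensional ℝ F]
  [MeasurableSpace F] [BorelSpace F]

lemma compact_GG {N : ℕ} (x : Fin N → E) : IsCompact (GG x) :=
  (compact_ball N).image (by fun_prop)

lemma closed_graph (N : ℕ) : IsClosed {q : (Fin N → E) × E | q.2 ∈ GG q.1} := by
  have : CompactSpace {c : Fin N → ℝ | ∑ i, |c i| ≤ 1} := isCompact_iff_compactSpace.1 (compact_ball N)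
  have h := isClosedMap_snd_of_compactSpace (X := {c : Fin N → ℝ | ∑ i, |c i| ≤ 1}) (Y := (Fin N → E) × E)
  have hc : IsClosed {r : {c : Fin N → ℝ | ∑ i, |c i| ≤ 1} × ((Fin N → E) × E) |
      ∑ i, r.1.1 i • r.2.1 i = r.2.2} := isClosed_eq (continuous_finsetSum _ fun i _ => ((continuous_apply i).comp (continuous_subtype_val.comp continuous_fst)).smul (by fun_prop)) (by fun_prop)
  convert h _ hc using 1
  ext ⟨x, y⟩
  constructor
  · rintro ⟨c, hc, hh⟩
    exact ⟨(⟨c, hc⟩, _), hh, rfl⟩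
  · rintro ⟨⟨⟨c, hc⟩, _⟩, h1, rfl⟩
    exact ⟨c, hc, h1⟩

lemma measurable_vol (N : ℕ) (μ : Measure E) [SFinite μ] :
    Measurable fun x : Fin N → E => (μ (GG x)).toReal := by
  have := measurable_measure_prodMk_left (ν := μ) (closed_graph (E := E) N).measurableSet
  exact this.ennreal_toReal

/-- the set of tuples in `K` -/
def cube (N : ℕ) (K : Set E) : Set (Fin N → E) := {x | ∀ i, x i ∈ K}

/-- generic moment -/
def mom (μ : Measure E) (N : ℕ) (p : ℝ) (K : Set E) : ℝ :=
  (∫ x in cube N K, ((μ (GG x)).toReal / (μ K).toReal) ^ p ∂(Measure.pi fun _ => μ)) /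
    (μ K).toReal ^ N

lemma mom_nonneg (μ : Measure E) (N : ℕ) (p : ℝ) (K : Set E) : 0 ≤ mom μ N p K := by
  unfold mom
  refine div_nonneg (integral_nonneg fun x => ?_) (by positivity)
  positivity

lemma mom_null (μ : Measure E) {N : ℕ} (hN : 2 ≤ N) (p : ℝ) {K : Set E} (h : μ K = 0) :
    mom μ N p K = 0 := by
  unfold mom
  rw [h, ENNReal.toReal_zero, zero_pow (by omega), div_zero]

lemma cube_integral {μ : Measure E} {ν : Measure F} [SigmaFinite μ] [SigmaFinite ν]
    {e : E ≃ₜ F} (he : MeasurePreserving e μ ν) (N : ℕ) (K : Set E)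
    (f : (Fin N → F) → ℝ) :
    ∫ x in cube N (e '' K), f x ∂(Measure.pi fun _ => ν) =
      ∫ x in cube N K, f (fun i => e (x i)) ∂(Measure.pi fun _ => μ) := by
  have h := measurePreserving_pi (fun _ : Fin N => μ) (fun _ => ν) (fun _ => he)
  let e' : (Fin N → E) ≃ₜ (Fin N → F) := Homeomorph.piCongrRight fun _ => e
  have hem : MeasurableEmbedding (fun (a : Fin N → E) (i : Fin N) => e (a i)) :=
    e'.measurableEmbedding
  rw [← h.setIntegral_preimage_emb hem]
  congr 2
  ext x
  simp [cube]

lemma mom_scale (ν : Measure E) [SigmaFinite ν] (c : NNReal) (hc : c ≠ 0) (N : ℕ) (p : ℝ)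
    (K : Set E) : mom (c • ν) N p K = mom ν N p K := by
  have hpi : Measure.pi (fun _ : Fin N => c • ν) = (c ^ N) • Measure.pi (fun _ : Fin N => ν) := by
    refine Measure.pi_eq fun s hs => ?_
    simp only [Measure.smul_apply, Measure.pi_pi, ENNReal.smul_def, smul_eq_mul,
      Finset.prod_mul_distrib]
    simp
  have hc' : (c : ℝ) ≠ 0 := by exact_mod_cast hc
  unfold mom
  rw [hpi, Measure.restrict_smul, integral_smul_nnreal_measure]
  simp only [Measure.smul_apply, ENNReal.smul_def, smul_eq_mul, ENNReal.toReal_mul,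
    ENNReal.coe_toReal]
  simp only [mul_div_mul_left _ _ hc', NNReal.smul_def, NNReal.coe_pow, mul_pow, smul_eq_mul]
  rw [mul_div_mul_left _ _ (pow_ne_zero _ hc')]

lemma GG_image {N : ℕ} (L : E →ₗ[ℝ] F) (x : Fin N → E) : GG (fun i => L (x i)) = L '' GG x := by
  unfold GG
  rw [image_image]
  simp

lemma mom_linear (μ : Measure E) (ν : Measure F) [μ.IsAddHaarMeasure] [ν.IsAddHaarMeasure]
    (L : E ≃L[ℝ] F) (N : ℕ) (p : ℝ) (K : Set E) :
    mom ν N p (L '' K) = mom μ N p K := by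
  have hmap : Measure.map L μ = Measure.addHaarScalarFactor (Measure.map L μ) ν • ν :=
    Measure.isAddLeftInvariant_eq_smul _ _
  set c := Measure.addHaarScalarFactor (Measure.map L μ) ν
  have hc : c ≠ 0 := (Measure.addHaarScalarFactor_pos_of_isAddHaarMeasure _ _).ne'
  rw [← mom_scale ν c hc, ← hmap]
  have hpres : MeasurePreserving L.toHomeomorph μ (Measure.map L μ) :=
    ⟨L.continuous.measurable, rfl⟩
  have hm : ∀ S : Set E, Measure.map L μ (L '' S) = μ S := by
    intro S
    have := L.toHomeomorph.toMeasurableEquiv.map_apply (μ := μ) (L '' S)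
    simp only [Homeomorph.toMeasurableEquiv_coe] at this
    change Measure.map L μ (L '' S) = μ (L ⁻¹' (L '' S)) at this
    rw [this, L.injective.preimage_image]
  unfold mom
  rw [hm]
  have := cube_integral hpres N K (fun x => ((Measure.map L μ (GG x)).toReal / (μ K).toReal) ^ p)
  change ∫ x in cube N (L '' K), _ ∂_ = _ at this
  rw [this]
  congr 2
  ext x
  have h2 : GG (fun i => L.toHomeomorph (x i)) = L '' GG x := GG_image (L : E →ₗ[ℝ] F) x
  rw [h2, hm]

lemma measurable_cube {N : ℕ} {K : Set E} (hK : MeasurableSet K) : MeasurableSet (cube N K) := by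
  have : cube N K = Set.pi univ fun _ => K := by ext; simp [cube]
  rw [this]
  exact MeasurableSet.univ_pi fun _ => hK

lemma GG_subset_ball {N : ℕ} {R : ℝ} {x : Fin N → E} (hx : ∀ i, ‖x i‖ ≤ R) (hR : 0 ≤ R) :
    GG x ⊆ Metric.closedBall 0 R := by
  rintro _ ⟨c, hc, rfl⟩
  rw [mem_closedBall_zero_iff]
  calc ‖∑ i, c i • x i‖ ≤ ∑ i, |c i| * R := by
        refine norm_sum_le_of_le _ fun i _ => ?_
        rw [norm_smul, Real.norm_eq_abs]
        exact mul_le_mul_of_nonneg_left (hx i) (abs_nonneg _)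
    _ = (∑ i, |c i|) * R := by rw [Finset.sum_mul]
    _ ≤ 1 * R := by gcongr; exact hc
    _ = R := one_mul _

lemma integrable_vol (μ : Measure E) [IsLocallyFiniteMeasure μ] [SigmaFinite μ]
    (N : ℕ) {p : ℝ} (hp : 0 ≤ p) (κ : ℝ) {K : Set E} (hK : IsCompact K)
    (φ : E → E) (hφ : Continuous φ) :
    IntegrableOn (fun x : Fin N → E => ((μ (GG fun i => φ (x i))).toReal / κ) ^ p) (cube N K)
      (Measure.pi fun _ => μ) := by
  obtain ⟨R, hR⟩ := (hK.image hφ).isBounded.exists_norm_le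
  set R' := max R 0
  have hfin : μ (Metric.closedBall 0 R') < ⊤ := (isCompact_closedBall _ _).measure_lt_top
  have hcube : (Measure.pi fun _ : Fin N => μ) (cube N K) ≠ ⊤ := by
    have : cube N K = Set.pi univ fun _ => K := by ext; simp [cube]
    rw [this, Measure.pi_pi]
    exact (ENNReal.prod_lt_top fun i _ => hK.measure_lt_top).ne
  have hmeas : Measurable (fun x : Fin N → E => ((μ (GG fun i => φ (x i))).toReal / κ) ^ p) := by
    have h1 : Measurable (fun x : Fin N → E => (μ (GG fun i => φ (x i))).toReal) :=
      (measurable_vol N μ).comp (by fun_prop)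
    fun_prop
  refine Measure.integrableOn_of_bounded (M := ((μ (Metric.closedBall 0 R')).toReal / |κ|) ^ p)
    hcube hmeas.aestronglyMeasurable ?_
  filter_upwards [ae_restrict_mem (measurable_cube hK.measurableSet)] with x hx
  refine (Real.abs_rpow_le_abs_rpow _ _).trans ?_
  refine Real.rpow_le_rpow (abs_nonneg _) ?_ hp
  rw [abs_div, abs_of_nonneg ENNReal.toReal_nonneg]
  refine div_le_div_of_nonneg_right ?_ (abs_nonneg _)
  refine ENNReal.toReal_mono hfin.ne (measure_mono ?_)
  exact GG_subset_ball (fun i => (hR _ ⟨x i, hx i, rfl⟩).trans (le_max_left _ _)) (le_max_right _ _)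

end meas
end SP
namespace SP

/-- the parallel chord movement -/
def phi (β : ℝ → ℝ) (t : ℝ) (x : ℝ × ℝ) : ℝ × ℝ := (x.1, x.2 + t * β x.1)

/-- the movement as a homeomorphism -/
def phiH (β : ℝ → ℝ) (hβ : Continuous β) (t : ℝ) : ℝ × ℝ ≃ₜ ℝ × ℝ where
  toFun := phi β t
  invFun := phi β (-t)
  left_inv x := by simp [phi]
  right_inv x := by simp [phi]
  continuous_toFun := by unfold phi; fun_prop
  continuous_invFun := by unfold phi; fun_prop

lemma phi_mp (β : ℝ → ℝ) (hβ : Continuous β) (t : ℝ) :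
    MeasurePreserving (phiH β hβ t) (volume : Measure (ℝ × ℝ)) volume := by
  have := MeasurePreserving.skew_product (μc := (volume : Measure ℝ)) (μd := (volume : Measure ℝ))
    (MeasurePreserving.id (volume : Measure ℝ))
    (g := fun a y => y + t * β a) (by unfold Function.uncurry; fun_prop)
    (Filter.Eventually.of_forall fun a => map_add_right_eq_self volume (t * β a))
  exact this

lemma phi_vol (β : ℝ → ℝ) (hβ : Continuous β) (t : ℝ) (K : Set (ℝ × ℝ)) :
    volume (phi β t '' K) = volume K := by
  have h := (phi_mp β hβ t).measure_preimage_emb (phiH β hβ t).measurableEmbedding (phi β t '' K)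
  have h2 : (phiH β hβ t) ⁻¹' (phi β t '' K) = K :=
    (phiH β hβ t).injective.preimage_image K
  rw [h2] at h
  exact h.symm

lemma mom_phi (β : ℝ → ℝ) (hβ : Continuous β) (t : ℝ) (N : ℕ) (p : ℝ) (K : Set (ℝ × ℝ)) :
    mom volume N p (phi β t '' K) =
    (∫ x in cube N K, ((volume (GG fun i => phi β t (x i))).toReal / (volume K).toReal) ^ p
      ∂(Measure.pi fun _ => volume)) / (volume K).toReal ^ N := by
  unfold mom
  rw [phi_vol β hβ]
  congr 1
  exact cube_integral (phi_mp β hβ t) N K _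

lemma slice_le {a b : ℝ} (ha : 0 ≤ a) (hb : 0 ≤ b) {A B C : Set ℝ} (hA : Convex ℝ A)
    (hB : Convex ℝ B)
    (h : ∀ p ∈ C, ∃ q ∈ A, ∃ r ∈ B, ∀ p' ∈ C, ∃ q' ∈ A, ∃ r' ∈ B, p' - p = a * (q' - q) + b * (r' - r)) :
    volume C ≤ ENNReal.ofReal a * volume A + ENNReal.ofReal b * volume B := by
  have key : ∀ {A : Set ℝ}, Convex ℝ A → ∀ q ∈ A, ∀ q' ∈ A, ENNReal.ofReal (q' - q) ≤ volume A := by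
    intro A hA q hq q' hq'
    rw [← Real.volume_Icc]
    exact measure_mono (hA.ordConnected.out hq hq')
  refine (Real.volume_le_diam C).trans ?_
  refine Metric.ediam_le fun x hx y hy => ?_
  wlog hxy : x ≤ y generalizing x y
  · rw [edist_comm]; exact this y hy x hx (le_of_not_ge hxy)
  rw [edist_dist, dist_comm, Real.dist_eq, abs_of_nonneg (by linarith)]
  obtain ⟨q, hq, r, hr, h'⟩ := h x hx
  obtain ⟨q', hq', r', hr', h''⟩ := h' y hy
  rw [h'']
  refine ENNReal.ofReal_add_le.trans ?_
  rw [ENNReal.ofReal_mul ha, ENNReal.ofReal_mul hb]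
  gcongr
  · exact key hA q hq q' hq'
  · exact key hB r hr r' hr'

lemma vol_convex (β : ℝ → ℝ) {a b t₁ t₂ : ℝ} (ha : 0 ≤ a) (hb : 0 ≤ b) (hab : a + b = 1)
    (ht : a * t₁ + b * t₂ = 0) {N : ℕ} (x : Fin N → ℝ × ℝ) :
    volume (GG x) ≤ ENNReal.ofReal a * volume (GG fun i => phi β t₁ (x i)) +
      ENNReal.ofReal b * volume (GG fun i => phi β t₂ (x i)) := by
  have hm : ∀ y : Fin N → ℝ × ℝ, MeasurableSet (GG y) := fun y => (compact_GG y).isClosed.measurableSet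
  rw [Measure.volume_eq_prod, Measure.prod_apply (hm _), Measure.prod_apply (hm _),
    Measure.prod_apply (hm _), ← lintegral_const_mul _ (measurable_measure_prodMk_left (hm _)),
    ← lintegral_const_mul _ (measurable_measure_prodMk_left (hm _)),
    ← lintegral_add_left ((measurable_measure_prodMk_left (hm _)).const_mul _)]
  refine lintegral_mono fun s => ?_
  have hconv : ∀ y : Fin N → ℝ × ℝ, Convex ℝ (Prod.mk s ⁻¹' GG y) := by
    intro y p hp q hq u v hu hv huv
    have := convex_GG y hp hq hu hv huv
    simp only [mem_preimage]
    convert this using 1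
    ext <;> simp [← add_mul, huv]
  have hex : ∀ t, ∀ c : Fin N → ℝ, ∑ i, c i • phi β t (x i) =
      ((∑ i, c i • x i).1, (∑ i, c i • x i).2 + t * ∑ i, c i * β (x i).1) := by
    intro t c
    ext
    · simp [Prod.fst_sum, phi]
    · simp only [Prod.snd_sum, phi, Prod.smul_snd, smul_eq_mul, mul_add, Finset.sum_add_distrib, Finset.mul_sum]
      congr 1
      refine Finset.sum_congr rfl fun i _ => by ring
  have hsl : ∀ c : Fin N → ℝ, ∑ i, |c i| ≤ 1 → ∀ y, ∑ i, c i • x i = (s, y) → ∀ t,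
      y + t * ∑ i, c i * β (x i).1 ∈ Prod.mk s ⁻¹' GG (fun i => phi β t (x i)) := by
    intro c hc y hy t
    refine ⟨c, hc, ?_⟩
    simp only [hex, hy]
  refine slice_le ha hb (hconv _) (hconv _) ?_
  rintro p ⟨c, hc, hp⟩
  refine ⟨_, hsl c hc p hp t₁, _, hsl c hc p hp t₂, ?_⟩
  rintro p' ⟨c', hc', hp'⟩
  refine ⟨_, hsl c' hc' p' hp' t₁, _, hsl c' hc' p' hp' t₂, ?_⟩
  have e1 : b = 1 - a := by linarith
  linear_combination (-(p' - p)) * hab + (∑ i, c i * β (x i).1 - ∑ i, c' i * β (x i).1) * ht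

lemma mom_step (β : ℝ → ℝ) (hβ : Continuous β) {t₁ t₂ : ℝ} (h1 : t₁ ≤ 0) (h2 : 0 ≤ t₂) (N : ℕ)
    {p : ℝ} (hp : 1 ≤ p) {K : Set (ℝ × ℝ)} (hK : IsCompact K) {m : ℝ}
    (hm1 : mom volume N p (phi β t₁ '' K) ≤ m) (hm2 : mom volume N p (phi β t₂ '' K) ≤ m) :
    mom volume N p K ≤ m := by
  obtain ⟨a, b, ha, hb, hab, ht⟩ : ∃ a b : ℝ, 0 ≤ a ∧ 0 ≤ b ∧ a + b = 1 ∧ a * t₁ + b * t₂ = 0 := by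
    rcases eq_or_lt_of_le (h1.trans h2) with h | h
    · exact ⟨1, 0, by simp, by simp, by simp, by simp; linarith⟩
    · have : 0 < t₂ - t₁ := by linarith
      refine ⟨t₂ / (t₂ - t₁), -t₁ / (t₂ - t₁), by positivity, div_nonneg (by linarith) this.le, ?_, ?_⟩
      · field_simp; ring
      · field_simp; ring
  have hle : mom volume N p K ≤ a * mom volume N p (phi β t₁ '' K) + b * mom volume N p (phi β t₂ '' K) := by
    rw [mom_phi β hβ, mom_phi β hβ, mom]
    rw [← mul_div_assoc, ← mul_div_assoc, ← add_div]
    refine div_le_div_of_nonneg_right ?_ (by positivity)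
    have hphi : ∀ t, Continuous (phi β t) := fun t => (phiH β hβ t).continuous
    have I := fun t => integrable_vol (volume : Measure (ℝ × ℝ)) N (p := p) (by linarith)
      (volume K).toReal hK (phi β t) (hphi t)
    rw [← integral_const_mul, ← integral_const_mul, ← integral_add ((I t₁).const_mul a) ((I t₂).const_mul b)]
    refine integral_mono (integrable_vol volume N (by linarith) _ hK id continuous_id) (((I t₁).const_mul a).add ((I t₂).const_mul b)) ?_
    intro x
    simp only
    have hfin : ∀ y : Fin N → ℝ × ℝ, volume (GG y) ≠ ⊤ := fun y => (compact_GG y).measure_lt_top.ne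
    have hv := vol_convex β ha hb hab ht x
    have hv' := ENNReal.toReal_mono (by finiteness [hfin (fun i => phi β t₁ (x i)), hfin (fun i => phi β t₂ (x i))]) hv
    rw [ENNReal.toReal_add (by finiteness [hfin (fun i => phi β t₁ (x i))]) (by finiteness [hfin (fun i => phi β t₂ (x i))]), ENNReal.toReal_mul, ENNReal.toReal_mul,
      ENNReal.toReal_ofReal ha, ENNReal.toReal_ofReal hb] at hv'
    have hc := (convexOn_rpow hp).2 (x := (volume (GG fun i => phi β t₁ (x i))).toReal / (volume K).toReal)
      (y := (volume (GG fun i => phi β t₂ (x i))).toReal / (volume K).toReal)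
      (by simp only [mem_Ici]; positivity) (by simp only [mem_Ici]; positivity) ha hb hab
    simp only [smul_eq_mul] at hc
    refine le_trans ?_ hc
    refine Real.rpow_le_rpow (by positivity) ?_ (by linarith)
    rw [← mul_div_assoc, ← mul_div_assoc, ← add_div]
    exact div_le_div_of_nonneg_right hv' (by positivity)
  calc _ ≤ _ := hle
    _ ≤ a * m + b * m := by gcongr
    _ = m := by rw [← add_mul, hab, one_mul]

end SP
namespace SP

lemma mom_alt {E : Type*} [NormedAddCommGroup E] [NormedSpace ℝ E] [FiniteDimensional ℝ E]
    [MeasurableSpace E] [BorelSpace E] (μ : Measure E) (N : ℕ) (p : ℝ) (K : Set E) :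
    mom μ N p K = (∫ x in cube N K, ((μ (GG x)).toReal) ^ p ∂(Measure.pi fun _ => μ)) /
      (μ K).toReal ^ p / (μ K).toReal ^ N := by
  unfold mom
  congr 1
  rw [← integral_div]
  congr 1
  ext x
  rw [Real.div_rpow (by positivity) (by positivity)]

lemma cube_vol {E : Type*} [NormedAddCommGroup E] [NormedSpace ℝ E] [FiniteDimensional ℝ E]
    [MeasurableSpace E] [BorelSpace E] (μ : Measure E) [SigmaFinite μ] (N : ℕ) (K : Set E) :
    (Measure.pi fun _ : Fin N => μ) (cube N K) = μ K ^ N := by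
  have : cube N K = Set.pi univ fun _ => K := by ext; simp [cube]
  rw [this, Measure.pi_pi]
  simp

lemma mom_approx (N : ℕ) {p : ℝ} (hp : 1 ≤ p) {K : Set (ℝ × ℝ)} (hK : IsCompact K)
    (hconv : Convex ℝ K) (hne : K.Nonempty) (hsym : ∀ x ∈ K, -x ∈ K) (hvol : volume K ≠ 0) {m : ℝ}
    (hm : ∀ X : Finset (ℝ × ℝ), (∀ x ∈ X, -x ∈ X) → mom volume N p (convexHull ℝ (X : Set (ℝ × ℝ))) ≤ m) :
    mom volume N p K ≤ m := by
  classical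
  have : Nonempty K := hne.to_subtype
  let d : ℕ → ℝ × ℝ := fun n => (TopologicalSpace.denseSeq K n : ℝ × ℝ)
  have hd : ∀ n, d n ∈ K := fun n => (TopologicalSpace.denseSeq K n).2
  let X : ℕ → Finset (ℝ × ℝ) := fun k => (Finset.range k).image d ∪ (Finset.range k).image (fun n => -d n)
  have hX : ∀ k, ∀ x ∈ X k, -x ∈ X k := by
    intro k x hx
    simp only [X, Finset.mem_union, Finset.mem_image] at hx ⊢
    rcases hx with ⟨n, hn, rfl⟩ | ⟨n, hn, rfl⟩
    · exact Or.inr ⟨n, hn, rfl⟩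
    · exact Or.inl ⟨n, hn, by simp⟩
  have hXmono : Monotone X := by
    intro i j hij
    have : Finset.range i ⊆ Finset.range j := Finset.range_mono hij
    exact Finset.union_subset_union (Finset.image_subset_image this) (Finset.image_subset_image this)
  have hXK : ∀ k, (X k : Set (ℝ × ℝ)) ⊆ K := by
    intro k x hx
    simp only [X, Finset.coe_union, Finset.coe_image, mem_union, mem_image] at hx
    rcases hx with ⟨n, hn, rfl⟩ | ⟨n, hn, rfl⟩
    · exact hd n
    · exact hsym _ (hd n)
  let P : ℕ → Set (ℝ × ℝ) := fun k => convexHull ℝ (X k : Set (ℝ × ℝ))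
  have hP : ∀ k, IsCompact (P k) := fun k => (X k).finite_toSet.isCompact_convexHull (𝕜 := ℝ)
  have hPmono : Monotone P := fun i j hij => convexHull_mono (by exact_mod_cast hXmono hij)
  have hPK : ∀ k, P k ⊆ K := fun k => convexHull_min (hXK k) hconv
  set C := ⋃ k, P k with hC
  have hCK : C ⊆ K := iUnion_subset hPK
  have hCconv : Convex ℝ C := hPmono.directed_le.convex_iUnion fun k => convex_convexHull _ _
  have hKC : K ⊆ closure C := by
    intro x hx
    have h1 : (⟨x, hx⟩ : K) ∈ closure (range (TopologicalSpace.denseSeq K)) :=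
      TopologicalSpace.denseRange_denseSeq K _
    have h2 := (continuous_subtype_val (p := fun x => x ∈ K)).closure_preimage_subset (closure C)
    have h3 : closure (range (TopologicalSpace.denseSeq K)) ⊆ Subtype.val ⁻¹' (closure C) := by
      refine closure_minimal ?_ (isClosed_closure.preimage continuous_subtype_val)
      rintro _ ⟨n, rfl⟩
      refine subset_closure (mem_iUnion.2 ⟨n+1, subset_convexHull _ _ ?_⟩)
      simp only [X, Finset.coe_union, Finset.coe_image, mem_union, mem_image]
      exact Or.inl ⟨n, by simp, rfl⟩
    exact h3 h1
  have hCvol : volume C = volume K := by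
    refine le_antisymm (measure_mono hCK) ?_
    calc volume K ≤ volume (C ∪ frontier C) := by
          refine measure_mono (hKC.trans ?_)
          rw [closure_eq_self_union_frontier]
      _ ≤ volume C + volume (frontier C) := measure_union_le _ _
      _ = volume C := by rw [hCconv.addHaar_frontier volume, add_zero]
  have hfin : volume K ≠ ⊤ := hK.measure_lt_top.ne
  have t1 : Filter.Tendsto (fun k => (volume (P k)).toReal) Filter.atTop (nhds (volume K).toReal) := by
    have := tendsto_measure_iUnion_atTop (μ := (volume : Measure (ℝ × ℝ))) hPmono
    rw [← hC, hCvol] at this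
    exact (ENNReal.tendsto_toReal hfin).comp this
  have hcu : ⋃ k, cube N (P k) = cube N C := by
    ext x
    simp only [mem_iUnion, cube, mem_ofPred_eq, hC]
    constructor
    · rintro ⟨k, hk⟩ i; exact ⟨k, hk i⟩
    · intro h
      choose k hk using h
      refine ⟨Finset.univ.sup k, fun i => hPmono (Finset.le_sup (f := k) (Finset.mem_univ i)) (hk i)⟩
  have hint := integrable_vol (volume : Measure (ℝ × ℝ)) N (p := p) (by linarith) 1 hK id continuous_id
  simp only [id, div_one] at hint
  have hcubemono : ∀ {A B : Set (ℝ × ℝ)}, A ⊆ B → cube N A ⊆ cube N B := fun h x hx i => h (hx i)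
  have t2 : Filter.Tendsto (fun k => ∫ x in cube N (P k), ((volume (GG x)).toReal) ^ p ∂(Measure.pi fun _ => (volume : Measure (ℝ × ℝ))))
      Filter.atTop (nhds (∫ x in cube N K, ((volume (GG x)).toReal) ^ p ∂(Measure.pi fun _ => (volume : Measure (ℝ × ℝ))))) := by
    have h := tendsto_setIntegral_of_monotone (μ := Measure.pi fun _ : Fin N => (volume : Measure (ℝ × ℝ)))
      (s := fun k => cube N (P k)) (f := fun x => ((volume (GG x)).toReal) ^ p)
      (fun k => measurable_cube (hP k).isClosed.measurableSet)
      (fun i j hij => hcubemono (hPmono hij))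
      (hint.mono_set (by rw [hcu]; exact hcubemono hCK))
    rw [hcu] at h
    convert h using 2
    refine setIntegral_congr_set ?_
    refine (ae_eq_of_subset_of_measure_ge (hcubemono hCK) ?_ ?_ ?_).symm
    · rw [cube_vol, cube_vol, hCvol]
    · exact (measurable_cube (MeasurableSet.iUnion fun k => (hP k).isClosed.measurableSet)).nullMeasurableSet
    · rw [cube_vol]; exact ENNReal.pow_ne_top hfin
  have hpos : (volume K).toReal ≠ 0 := ENNReal.toReal_ne_zero.2 ⟨hvol, hfin⟩
  have t3 : Filter.Tendsto (fun k => mom volume N p (P k)) Filter.atTop (nhds (mom volume N p K)) := by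
    simp only [mom_alt]
    refine (t2.div (t1.rpow_const (Or.inl hpos)) ?_).div (t1.pow N) (pow_ne_zero _ hpos)
    exact (Real.rpow_pos_of_pos (lt_of_le_of_ne ENNReal.toReal_nonneg hpos.symm) _).ne'
  exact le_of_tendsto' t3 fun k => hm (X k) (hX k)

end SP
namespace SP

/-- upper cone inequality at the apex `(S, y)` -/
def Up (S y : ℝ) (x : ℝ × ℝ) : Prop := (S - 1) * (x.2 - y) ≤ (S - x.1) * (1 - y)
/-- lower cone inequality at the apex `(S, y)` -/
def Lo (S y : ℝ) (x : ℝ × ℝ) : Prop := -((S - x.1) * (1 + y)) ≤ (S - 1) * (x.2 - y)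
/-- the triangle with vertices `(1, 1)`, `(1, -1)`, `(S, y)` -/
def Tri (S y : ℝ) : Set (ℝ × ℝ) := {x | 1 ≤ x.1 ∧ x.1 ≤ S ∧ Up S y x ∧ Lo S y x}

lemma join_sub {S y : ℝ} (hS : 1 < S) {Q : Set (ℝ × ℝ)} (hQ : Convex ℝ Q)
    (ha : ((1, 1) : ℝ × ℝ) ∈ Q) (hb : ((1, -1) : ℝ × ℝ) ∈ Q)
    (h1 : ∀ x ∈ Q, x.1 ≤ 1) (hU : ∀ x ∈ Q, Up S y x) (hL : ∀ x ∈ Q, Lo S y x) :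
    convexHull ℝ (insert ((S, y) : ℝ × ℝ) Q) ⊆ Q ∪ Tri S y := by
  rw [convexHull_insert ⟨_, ha⟩, hQ.convexHull_eq]
  intro x hx
  rw [convexJoin_singleton_left] at hx
  simp only [mem_iUnion] at hx
  obtain ⟨q, hq, hx⟩ := hx
  obtain ⟨s, t, hs, ht, hst, rfl⟩ := hx
  have hq1 := h1 q hq
  have hqU := hU q hq
  have hqL := hL q hq
  unfold Up at hqU
  unfold Lo at hqL
  have es : s = 1 - t := by linarith
  subst es
  by_cases hc : 1 ≤ ((1 - t) • ((S, y) : ℝ × ℝ) + t • q).1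
  · right
    refine ⟨hc, ?_, ?_, ?_⟩
    · simp; nlinarith
    · simp [Up]; nlinarith [mul_le_mul_of_nonneg_left hqU ht]
    · simp [Lo]; nlinarith [mul_le_mul_of_nonneg_left hqL ht]
  · left
    simp at hc
    have hd : 0 < S - q.1 := by linarith
    -- the point on the chord
    set k := (S - 1) / (S - q.1) with hk
    have hkd : k * (S - q.1) = S - 1 := by rw [hk]; field_simp
    have hk0 : 0 < k := div_pos (by linarith) hd
    have hk1 : k ≤ 1 := by rw [hk, div_le_one hd]; linarith
    have hkt : k < t := by
      by_contra hh
      push Not at hh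
      nlinarith
    set c2 := y + k * (q.2 - y) with hc2
    have hc2U : c2 ≤ 1 := by
      have : (S - q.1) * (k * (q.2 - y)) ≤ (S - q.1) * (1 - y) := by
        calc (S - q.1) * (k * (q.2 - y)) = (k * (S - q.1)) * (q.2 - y) := by ring
          _ = (S - 1) * (q.2 - y) := by rw [hkd]
          _ ≤ _ := hqU
      have := le_of_mul_le_mul_left this hd
      linarith
    have hc2L : -1 ≤ c2 := by
      have : (S - q.1) * (-(1 + y)) ≤ (S - q.1) * (k * (q.2 - y)) := by
        calc (S - q.1) * (-(1 + y)) = -((S - q.1) * (1 + y)) := by ring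
          _ ≤ (S - 1) * (q.2 - y) := hqL
          _ = (k * (S - q.1)) * (q.2 - y) := by rw [hkd]
          _ = _ := by ring
      have := le_of_mul_le_mul_left this hd
      linarith
    have hcQ : ((1, c2) : ℝ × ℝ) ∈ Q := by
      have := hQ ha hb (a := (1 + c2) / 2) (b := (1 - c2) / 2) (by linarith) (by linarith) (by ring)
      convert this using 1
      ext <;> simp <;> ring
    rcases eq_or_lt_of_le hk1 with h | h
    · exact absurd hkt (by linarith)
    have h1k : 0 < 1 - k := by linarith
    have := hQ hcQ hq (a := (1 - t) / (1 - k)) (b := (t - k) / (1 - k))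
      (div_nonneg hs h1k.le) (div_nonneg (by linarith) h1k.le) (by field_simp; ring)
    convert this using 1
    ext
    · simp
      field_simp
      linear_combination (t - 1) * hkd
    · simp [hc2]
      field_simp
      ring

lemma tri_sub {S y : ℝ} (hS : 1 < S) {Q : Set (ℝ × ℝ)} (hQ : Convex ℝ Q)
    (ha : ((1, 1) : ℝ × ℝ) ∈ Q) (hb : ((1, -1) : ℝ × ℝ) ∈ Q) (hv : ((S, y) : ℝ × ℝ) ∈ Q) :
    Tri S y ⊆ Q := by
  rintro ⟨x1, x2⟩ ⟨h1, h2, h3, h4⟩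
  simp only [Up, Lo] at h1 h2 h3 h4
  have hS' : 0 < S - 1 := by linarith
  set k := (S - x1) / (S - 1) with hk
  have hkd : k * (S - 1) = S - x1 := by rw [hk]; field_simp
  have hk0 : 0 ≤ k := div_nonneg (by linarith) hS'.le
  have hk1 : k ≤ 1 := by rw [hk, div_le_one hS']; linarith
  have g3 : x2 - y ≤ k * (1 - y) := by
    refine le_of_mul_le_mul_left ?_ hS'
    calc _ ≤ _ := h3
      _ = _ := by rw [← hkd]; ring
  have g4 : -(k * (1 + y)) ≤ x2 - y := by
    refine le_of_mul_le_mul_left ?_ hS'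
    calc _ = -((S - x1) * (1 + y)) := by rw [← hkd]; ring
      _ ≤ _ := h4
  have := hQ.sum_mem (t := Finset.univ) (w := ![1 - k, (k + (x2 - y + k * y)) / 2, (k - (x2 - y + k * y)) / 2])
    (z := ![(S, y), (1, 1), (1, -1)]) ?_ ?_ ?_
  · convert this using 1
    simp only [Fin.sum_univ_three]
    ext
    · simp; linear_combination hkd
    · simp; ring
  · intro i _
    fin_cases i <;> simp <;> linarith
  · simp only [Fin.sum_univ_three]; simp; ring
  · intro i _
    fin_cases i <;> simp [ha, hb, hv]

lemma neg_mem_hull {Y : Set (ℝ × ℝ)} (hY : ∀ x ∈ Y, -x ∈ Y) {x : ℝ × ℝ}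
    (hx : x ∈ convexHull ℝ Y) : -x ∈ convexHull ℝ Y := by
  have h : -Y = Y := by
    ext z
    exact ⟨fun hz => by simpa using hY _ hz, fun hz => hY _ hz⟩
  have := convexHull_neg (𝕜 := ℝ) Y
  rw [h] at this
  rw [this]
  simpa using hx

lemma abs_mem_hull {Y : Set (ℝ × ℝ)} (hY : ∀ x ∈ Y, -x ∈ Y) {u w : ℝ × ℝ}
    (hu : u ∈ convexHull ℝ Y) (hw : w ∈ convexHull ℝ Y) {c d : ℝ} (h : |c| + |d| ≤ 1) :
    c • u + d • w ∈ convexHull ℝ Y := by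
  have hconv := convex_convexHull ℝ Y
  have key : ∀ e : ℝ, ∀ z ∈ convexHull ℝ Y, ∃ z' ∈ convexHull ℝ Y, e • z = |e| • z' := by
    intro e z hz
    rcases abs_choice e with h | h
    · exact ⟨z, hz, by rw [h]⟩
    · exact ⟨-z, neg_mem_hull hY hz, by rw [h]; simp⟩
  obtain ⟨u', hu', eu⟩ := key c u hu
  obtain ⟨w', hw', ew⟩ := key d w hw
  have h0 : (0 : ℝ × ℝ) ∈ convexHull ℝ Y := by
    have := hconv hu (neg_mem_hull hY hu) (a := 1/2) (b := 1/2) (by norm_num) (by norm_num) (by norm_num)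
    simpa using this
  have := hconv.sum_mem (t := Finset.univ) (w := ![|c|, |d|, 1 - |c| - |d|]) (z := ![u', w', 0]) ?_ ?_ ?_
  · rw [eu, ew]
    simpa [Fin.sum_univ_three] using this
  · intro i _
    fin_cases i <;> simp
    linarith
  · simp [Fin.sum_univ_three]
  · intro i _
    fin_cases i <;> simp [hu', hw', h0]

lemma hull_decomp {S y : ℝ} (hS : 1 < S) {Y : Set (ℝ × ℝ)} (hY : ∀ x ∈ Y, -x ∈ Y)
    (ha : ((1, 1) : ℝ × ℝ) ∈ Y) (hb : ((1, -1) : ℝ × ℝ) ∈ Y)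
    (h1 : ∀ x ∈ Y, x.1 ≤ 1) (hU : ∀ x ∈ Y, Up S y x) (hL : ∀ x ∈ Y, Lo S y x) :
    convexHull ℝ (insert ((S, y) : ℝ × ℝ) (insert (-(S, y) : ℝ × ℝ) Y)) =
      convexHull ℝ Y ∪ Tri S y ∪ -Tri S y := by
  set Q := convexHull ℝ Y with hQdef
  have hQ : Convex ℝ Q := convex_convexHull _ _
  have hYQ : Y ⊆ Q := subset_convexHull _ _
  have c1 : Convex ℝ {x : ℝ × ℝ | x.1 ≤ 1} := convex_halfSpace_le (LinearMap.fst ℝ ℝ ℝ).isLinear 1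
  have cU : Convex ℝ {x : ℝ × ℝ | Up S y x} := by
    intro x hx z hz s t hs ht hst
    simp only [Up, mem_ofPred_eq] at *
    have es : s = 1 - t := by linarith
    subst es
    simp
    nlinarith [mul_le_mul_of_nonneg_left hx hs, mul_le_mul_of_nonneg_left hz ht]
  have cL : Convex ℝ {x : ℝ × ℝ | Lo S y x} := by
    intro x hx z hz s t hs ht hst
    simp only [Lo, mem_ofPred_eq] at *
    have es : s = 1 - t := by linarith
    subst es
    simp
    nlinarith [mul_le_mul_of_nonneg_left hx hs, mul_le_mul_of_nonneg_left hz ht]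
  have q1 : ∀ x ∈ Q, x.1 ≤ 1 := convexHull_min h1 c1
  have qU : ∀ x ∈ Q, Up S y x := convexHull_min hU cU
  have qL : ∀ x ∈ Q, Lo S y x := convexHull_min hL cL
  have hneg : ∀ x ∈ Q, -x ∈ Q := fun x hx => neg_mem_hull hY hx
  have hA := join_sub hS hQ (hYQ ha) (hYQ hb) q1 qU qL
  set A := convexHull ℝ (insert ((S, y) : ℝ × ℝ) Q) with hAdef
  have hQA : Q ⊆ A := (subset_insert _ _).trans (subset_convexHull _ _)
  have hAconv : Convex ℝ A := convex_convexHull _ _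
  have h0 : (0 : ℝ × ℝ) ∈ Q := by
    have := abs_mem_hull hY (hYQ ha) (hYQ ha) (c := 0) (d := 0) (by simp)
    simpa using this
  have y1 : y ≤ S := by have := qU 0 h0; simp [Up] at this; nlinarith
  have y2 : -S ≤ y := by have := qL 0 h0; simp [Lo] at this; nlinarith
  have hA' : ∀ C : Set (ℝ × ℝ), Convex ℝ C → Q ⊆ C → -((S, y) : ℝ × ℝ) ∈ C → -A ⊆ C := by
    intro C hC hQC hv x hx
    have : A ⊆ -C := by
      refine convexHull_min ?_ hC.neg
      rintro z (rfl | hz)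
      · simpa using hv
      · exact hQC (hneg z hz)
    simpa using this hx
  have n1 : (-((S, y) : ℝ × ℝ)).1 ≤ 1 := by simp; linarith
  have n2 : Up S y (-((S, y) : ℝ × ℝ)) := by simp [Up]; nlinarith
  have n3 : Lo S y (-((S, y) : ℝ × ℝ)) := by simp [Lo]; nlinarith
  have hB := join_sub hS hAconv.neg (hQA (hneg _ (hYQ ha))) (hQA (hneg _ (hYQ hb)))
    (hA' _ c1 q1 n1) (hA' _ cU qU n2) (hA' _ cL qL n3)
  apply Subset.antisymm
  · intro x hx
    have : -x ∈ convexHull ℝ (insert ((S, y) : ℝ × ℝ) (-A)) := by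
      have h2 : convexHull ℝ (insert ((S, y) : ℝ × ℝ) (insert (-(S, y) : ℝ × ℝ) Y)) ⊆
          -convexHull ℝ (insert ((S, y) : ℝ × ℝ) (-A)) := by
        refine convexHull_min ?_ (convex_convexHull _ _).neg
        rintro z (rfl | rfl | hz)
        · exact subset_convexHull _ _ (Or.inr (by simpa using subset_convexHull _ _ (mem_insert _ _)))
        · exact subset_convexHull _ _ (Or.inl (by simp))
        · exact subset_convexHull _ _ (Or.inr (by simpa using hQA (hYQ hz)))
      exact h2 hx
    rcases hB this with h | h
    · exact Or.inl (hA (by simpa using h))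
    · exact Or.inr h
  · set H := convexHull ℝ (insert ((S, y) : ℝ × ℝ) (insert (-(S, y) : ℝ × ℝ) Y)) with hH
    have hHconv : Convex ℝ H := convex_convexHull _ _
    have hYH : Q ⊆ H := convexHull_mono ((subset_insert _ _).trans (subset_insert _ _))
    have hT : Tri S y ⊆ H := tri_sub hS hHconv (hYH (hYQ ha)) (hYH (hYQ hb)) (subset_convexHull _ _ (mem_insert _ _))
    have hHneg : ∀ x ∈ H, -x ∈ H := by
      refine fun x hx => neg_mem_hull ?_ hx
      rintro z (rfl | rfl | hz)
      · exact Or.inr (Or.inl rfl)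
      · exact Or.inl (by simp)
      · exact Or.inr (Or.inr (hY z hz))
    refine union_subset (union_subset hYH hT) ?_
    intro x hx
    simpa using hHneg _ (hT hx)

/-- speed of the movement -/
def beta (S s : ℝ) : ℝ := (max (s - 1) 0 - max (-s - 1) 0) / (S - 1)

lemma beta_cont (S : ℝ) : Continuous (beta S) := by unfold beta; fun_prop

lemma beta_in {S s : ℝ} (h1 : s ≤ 1) (h2 : -1 ≤ s) : beta S s = 0 := by
  unfold beta
  rw [max_eq_right (by linarith), max_eq_right (by linarith)]; simp

lemma beta_out {S s : ℝ} (h1 : 1 ≤ s) : beta S s = (s - 1) / (S - 1) := by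
  unfold beta
  rw [max_eq_left (by linarith), max_eq_right (by linarith)]; simp

lemma beta_neg (S s : ℝ) : beta S (-s) = - beta S s := by
  unfold beta
  rw [neg_neg]; ring

lemma phi_neg (S t : ℝ) (x : ℝ × ℝ) : phi (beta S) t (-x) = - phi (beta S) t x := by
  unfold phi
  ext
  · simp
  · simp [beta_neg]; ring

lemma phi_tri {S y : ℝ} (hS : 1 < S) (t : ℝ) {x : ℝ × ℝ} (hx : x ∈ Tri S y) :
    phi (beta S) t x ∈ Tri S (y + t) := by
  obtain ⟨h1, h2, h3, h4⟩ := hx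
  have hS' : 0 < S - 1 := by linarith
  have e : (S - 1) * (t * beta S x.1) = t * (x.1 - 1) := by
    rw [beta_out h1]; field_simp
  refine ⟨h1, h2, ?_, ?_⟩
  · simp only [Up, phi] at *; nlinarith
  · simp only [Lo, phi] at *; nlinarith

lemma phi_image {S y : ℝ} (hS : 1 < S) (t : ℝ) {Q : Set (ℝ × ℝ)} (h1 : ∀ x ∈ Q, x.1 ≤ 1)
    (h2 : ∀ x ∈ Q, -1 ≤ x.1) :
    phi (beta S) t '' (Q ∪ Tri S y ∪ -Tri S y) = Q ∪ Tri S (y + t) ∪ -Tri S (y + t) := by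
  have hQ : ∀ t, ∀ x ∈ Q, phi (beta S) t x = x := by
    intro t x hx
    unfold phi
    rw [beta_in (h1 x hx) (h2 x hx)]; simp
  have main : ∀ y t, ∀ x ∈ Q ∪ Tri S y ∪ -Tri S y, phi (beta S) t x ∈ Q ∪ Tri S (y + t) ∪ -Tri S (y + t) := by
    rintro y t x ((hx | hx) | hx)
    · exact Or.inl (Or.inl (by rw [hQ t x hx]; exact hx))
    · exact Or.inl (Or.inr (phi_tri hS t hx))
    · refine Or.inr ?_
      have := phi_tri hS t hx
      rw [phi_neg] at this
      exact this
  apply Subset.antisymm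
  · rintro _ ⟨x, hx, rfl⟩; exact main y t x hx
  · intro x hx
    refine ⟨phi (beta S) (-t) x, ?_, ?_⟩
    · have := main (y + t) (-t) x hx
      simpa using this
    · simp [phi]

end SP
namespace SP

lemma one_sided {X : Finset (ℝ × ℝ)} (hX : ∀ x ∈ X, -x ∈ X) {S y : ℝ} (hS : 1 < S)
    (hv : ((S, y) : ℝ × ℝ) ∈ X) (ha : ((1, 1) : ℝ × ℝ) ∈ X) (hb : ((1, -1) : ℝ × ℝ) ∈ X)
    (hU : ∀ w ∈ X, w ≠ (S, y) → w ≠ -(S, y) → Up S y w)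
    (hL : ∀ w ∈ X, w ≠ (S, y) → w ≠ -(S, y) → Lo S y w)
    (h1 : ∀ w ∈ X, w ≠ (S, y) → w ≠ -(S, y) → w ≠ (1, 1) → w ≠ (1, -1) → w.1 < 1) :
    ∃ t : ℝ, 0 ≤ t ∧ ∃ X' : Finset (ℝ × ℝ), (∀ x ∈ X', -x ∈ X') ∧ X'.card < X.card ∧
      phi (beta S) t '' convexHull ℝ (X : Set (ℝ × ℝ)) = convexHull ℝ (X' : Set (ℝ × ℝ)) := by
  classical
  set v : ℝ × ℝ := (S, y) with hvdef
  set a : ℝ × ℝ := (1, 1) with hadef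
  set b : ℝ × ℝ := (1, -1) with hbdef
  have hv1 : v.1 = S := rfl
  have ne1 : ∀ {w : ℝ × ℝ}, w.1 ≤ 1 → w ≠ v := by
    rintro w hw rfl; linarith
  have ne2 : ∀ {w : ℝ × ℝ}, -1 ≤ w.1 → w ≠ -v := by
    rintro w hw rfl
    simp [hv1] at hw; linarith
  set Y : Finset (ℝ × ℝ) := (X.erase v).erase (-v) with hYdef
  have memY : ∀ w, w ∈ Y ↔ w ∈ X ∧ w ≠ v ∧ w ≠ -v := by
    intro w; simp [hYdef]; tauto
  have hY : ∀ x ∈ Y, -x ∈ Y := by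
    intro x hx
    rw [memY] at *
    refine ⟨hX x hx.1, fun h => hx.2.2 ?_, fun h => hx.2.1 ?_⟩
    · rw [← h, neg_neg]
    · simpa using h
  have haY : a ∈ Y := (memY a).2 ⟨ha, ne1 (by simp [hadef]), ne2 (by simp [hadef])⟩
  have hbY : b ∈ Y := (memY b).2 ⟨hb, ne1 (by simp [hbdef]), ne2 (by simp [hbdef])⟩
  have hY1 : ∀ w ∈ Y, w.1 ≤ 1 := by
    intro w hw
    obtain ⟨h, h', h''⟩ := (memY w).1 hw
    by_cases e1 : w = a
    · rw [e1]
    by_cases e2 : w = b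
    · rw [e2]
    exact (h1 w h h' h'' e1 e2).le
  have hvX : insert v (insert (-v) (Y : Set (ℝ × ℝ))) = X := by
    ext w
    simp only [mem_insert_iff, Finset.mem_coe, memY]
    constructor
    · rintro (rfl | rfl | h)
      · exact hv
      · exact hX _ hv
      · exact h.1
    · intro h; tauto
  have hvv : v ≠ -v := by
    intro h
    have := congrArg Prod.fst h
    simp [hv1] at this; linarith
  have hcardY : Y.card + 2 = X.card := by
    rw [hYdef, Finset.card_erase_of_mem, Finset.card_erase_of_mem hv]
    · have : 1 < X.card := Finset.one_lt_card.2 ⟨v, hv, -v, hX v hv, hvv⟩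
      omega
    · simp [hX v hv, hvv.symm]
  -- the candidates
  set Z : Finset (ℝ × ℝ) := Y.filter (fun w => w ≠ a ∧ w ≠ b ∧ w ≠ -a) with hZ
  have memZ : ∀ w, w ∈ Z ↔ w ∈ Y ∧ w ≠ a ∧ w ≠ b ∧ w ≠ -a := by
    intro w; rw [hZ, Finset.mem_filter]
  have hbZ : -b ∈ Z := by
    rw [memZ]
    refine ⟨hY b hbY, ?_, ?_, ?_⟩ <;> intro h <;> have := congrArg Prod.fst h <;>
      have := congrArg Prod.snd h <;> simp [hadef, hbdef] at * <;> linarith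
  let Yw : ℝ × ℝ → ℝ := fun w => (S - w.1 - (S - 1) * w.2) / (1 - w.1)
  obtain ⟨w, hwZ, hmin⟩ := Finset.exists_min_image Z Yw ⟨_, hbZ⟩
  obtain ⟨hwY, hwa, hwb, hwna⟩ := (memZ w).1 hwZ
  have hZ1 : ∀ z ∈ Z, z.1 < 1 := by
    intro z hz
    obtain ⟨hzY, hza, hzb, _⟩ := (memZ z).1 hz
    obtain ⟨h, h', h''⟩ := (memY z).1 hzY
    exact h1 z h h' h'' hza hzb
  have hUiff : ∀ z ∈ Z, ∀ y', Up S y' z ↔ y' ≤ Yw z := by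
    intro z hz y'
    have := hZ1 z hz
    simp only [Yw]
    rw [le_div_iff₀ (by linarith), Up]
    constructor <;> intro h <;> nlinarith
  set y1 := Yw w with hy1
  have hyy : y ≤ y1 := by
    obtain ⟨h, h', h''⟩ := (memY w).1 hwY
    exact (hUiff w hwZ y).1 (hU w h h' h'')
  have hy1le : y1 ≤ 1 := by
    have := hmin _ hbZ
    simp only [Yw, hbdef] at this
    refine this.trans (le_of_eq ?_)
    simp
  have hU1 : ∀ z ∈ Y, Up S y1 z := by
    intro z hz
    by_cases e1 : z = a
    · rw [e1]; simp [Up, hadef]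
    by_cases e2 : z = b
    · rw [e2]; simp [Up, hbdef]; nlinarith
    by_cases e3 : z = -a
    · rw [e3]; simp [Up, hadef]; nlinarith
    have hzZ := (memZ z).2 ⟨hz, e1, e2, e3⟩
    exact (hUiff z hzZ y1).2 (hmin z hzZ)
  have hL1 : ∀ z ∈ Y, Lo S y1 z := by
    intro z hz
    obtain ⟨h, h', h''⟩ := (memY z).1 hz
    have := hL z h h' h''
    have := hY1 z hz
    unfold Lo at *
    nlinarith
  set v1 : ℝ × ℝ := (S, y1) with hv1def
  have hYs : ∀ x ∈ (Y : Set (ℝ × ℝ)), -x ∈ (Y : Set (ℝ × ℝ)) := fun x hx => hY x hx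
  have d0 := hull_decomp (y := y) hS hYs haY hbY hY1
    (fun z hz => by obtain ⟨h, h', h''⟩ := (memY z).1 hz; exact hU z h h' h'')
    (fun z hz => by obtain ⟨h, h', h''⟩ := (memY z).1 hz; exact hL z h h' h'')
  have d1 := hull_decomp (y := y1) hS hYs haY hbY hY1 hU1 hL1
  rw [← hvdef, hvX] at d0
  rw [← hv1def] at d1
  have q1 : ∀ x ∈ convexHull ℝ (Y : Set (ℝ × ℝ)), x.1 ≤ 1 :=
    convexHull_min (t := {x : ℝ × ℝ | x.1 ≤ 1}) hY1 (convex_halfSpace_le (LinearMap.fst ℝ ℝ ℝ).isLinear 1)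
  have q2 : ∀ x ∈ convexHull ℝ (Y : Set (ℝ × ℝ)), -1 ≤ x.1 := by
    intro x hx
    have := q1 _ (neg_mem_hull hYs hx)
    simp at this; linarith
  have hph := phi_image (y := y) hS (y1 - y) q1 q2
  rw [← d0, add_sub_cancel, ← d1] at hph
  refine ⟨y1 - y, by linarith, insert v1 (insert (-v1) ((Y.erase a).erase (-a))), ?_, ?_, ?_⟩
  · intro x hx
    simp only [Finset.mem_insert, Finset.mem_erase] at *
    rcases hx with rfl | rfl | ⟨h, h', h''⟩
    · exact Or.inr (Or.inl rfl)
    · exact Or.inl (by simp)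
    · refine Or.inr (Or.inr ⟨fun e => h' ?_, fun e => h ?_, hY x h''⟩)
      · simpa using e
      · rw [← e, neg_neg]
  · have hna : -a ∈ Y.erase a := by
      refine Finset.mem_erase.2 ⟨?_, hY a haY⟩
      intro h; have := congrArg Prod.fst h; simp [hadef] at this; linarith
    have c1 : ((Y.erase a).erase (-a)).card < Y.card :=
      (Finset.card_lt_card (Finset.erase_ssubset hna)).trans (Finset.card_lt_card (Finset.erase_ssubset haY))
    have c2 := Finset.card_insert_le v1 (insert (-v1) ((Y.erase a).erase (-a)))
    have c3 := Finset.card_insert_le (-v1) ((Y.erase a).erase (-a))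
    omega
  · rw [hph]
    set X' : Set (ℝ × ℝ) := ((insert v1 (insert (-v1) ((Y.erase a).erase (-a))) : Finset (ℝ × ℝ)) : Set (ℝ × ℝ)) with hX'
    have hX'e : X' = insert v1 (insert (-v1) (((Y : Set (ℝ × ℝ)) \ {a}) \ {-a})) := by
      rw [hX']; push_cast; rfl
    have hsymX' : ∀ x ∈ X', -x ∈ X' := by
      rw [hX'e]
      rintro x (rfl | rfl | ⟨⟨h, h'⟩, h''⟩)
      · exact Or.inr (Or.inl rfl)
      · exact Or.inl (by simp)
      · refine Or.inr (Or.inr ⟨⟨hY x h, fun e => h'' ?_⟩, fun e => h' ?_⟩)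
        · rw [mem_singleton_iff] at *; rw [← e, neg_neg]
        · rw [mem_singleton_iff] at *; simpa using e
    have haX' : a ∈ convexHull ℝ X' := by
      have m1 : w ∈ convexHull ℝ X' := by
        refine subset_convexHull _ _ ?_
        rw [hX'e]
        exact Or.inr (Or.inr ⟨⟨hwY, hwa⟩, hwna⟩)
      have m2 : v1 ∈ convexHull ℝ X' := by
        refine subset_convexHull _ _ ?_
        rw [hX'e]; exact Or.inl rfl
      have hw1 := hZ1 w hwZ
      have hpos : 0 < S - w.1 := by linarith
      have hyw : y1 * (1 - w.1) = S - w.1 - (S - 1) * w.2 := by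
        rw [hy1]; simp only [Yw]
        rw [div_mul_cancel₀]; linarith
      have := (convex_convexHull ℝ X') m1 m2 (a := (S - 1) / (S - w.1)) (b := (1 - w.1) / (S - w.1))
        (div_nonneg (by linarith) hpos.le) (div_nonneg (by linarith) hpos.le) (by field_simp; ring)
      convert this using 1
      clear_value y1
      ext
      · simp [hadef, hv1def]; field_simp; ring
      · simp [hadef, hv1def]; field_simp; linarith
    apply Subset.antisymm
    · refine convexHull_min ?_ (convex_convexHull _ _)
      rintro x (rfl | rfl | hx)
      · exact subset_convexHull _ _ (by rw [hX'e]; exact Or.inl rfl)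
      · exact subset_convexHull _ _ (by rw [hX'e]; exact Or.inr (Or.inl rfl))
      · by_cases e1 : x = a
        · rw [e1]; exact haX'
        by_cases e2 : x = -a
        · rw [e2]; exact neg_mem_hull hsymX' haX'
        exact subset_convexHull _ _ (by rw [hX'e]; exact Or.inr (Or.inr ⟨⟨hx, e1⟩, e2⟩))
    · refine convexHull_mono ?_
      rw [hX'e]
      exact insert_subset_insert (insert_subset_insert (sdiff_subset.trans sdiff_subset))

/-- reflection -/
def rfl2 : (ℝ × ℝ) →ₗ[ℝ] (ℝ × ℝ) where
  toFun x := (x.1, -x.2)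
  map_add' x y := by ext <;> simp; ring
  map_smul' c x := by ext <;> simp

lemma rfl2_rfl2 (x : ℝ × ℝ) : rfl2 (rfl2 x) = x := by simp [rfl2]

lemma one_sided' {X : Finset (ℝ × ℝ)} (hX : ∀ x ∈ X, -x ∈ X) {S y : ℝ} (hS : 1 < S)
    (hv : ((S, y) : ℝ × ℝ) ∈ X) (ha : ((1, 1) : ℝ × ℝ) ∈ X) (hb : ((1, -1) : ℝ × ℝ) ∈ X)
    (hU : ∀ w ∈ X, w ≠ (S, y) → w ≠ -(S, y) → Up S y w)
    (hL : ∀ w ∈ X, w ≠ (S, y) → w ≠ -(S, y) → Lo S y w)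
    (h1 : ∀ w ∈ X, w ≠ (S, y) → w ≠ -(S, y) → w ≠ (1, 1) → w ≠ (1, -1) → w.1 < 1) :
    ∃ t : ℝ, t ≤ 0 ∧ ∃ X' : Finset (ℝ × ℝ), (∀ x ∈ X', -x ∈ X') ∧ X'.card < X.card ∧
      phi (beta S) t '' convexHull ℝ (X : Set (ℝ × ℝ)) = convexHull ℝ (X' : Set (ℝ × ℝ)) := by
  classical
  have hne : ∀ {w z : ℝ × ℝ}, rfl2 w ≠ rfl2 z → w ≠ z := fun h e => h (by rw [e])
  have ev : rfl2 (S, y) = (S, -y) := rfl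
  have ev' : rfl2 (-(S, y)) = -(S, -y) := by rw [map_neg, ev]
  have ea : rfl2 (1, 1) = (1, -1) := rfl
  have eb : rfl2 (1, -1) = (1, 1) := by simp [rfl2]
  obtain ⟨t, ht, X', hX', hc, he⟩ := one_sided (X := X.image rfl2) (S := S) (y := -y)
    (by
      intro x hx
      obtain ⟨z, hz, rfl⟩ := Finset.mem_image.1 hx
      exact Finset.mem_image.2 ⟨-z, hX z hz, map_neg _ _⟩) hS
    (Finset.mem_image.2 ⟨_, hv, ev⟩) (Finset.mem_image.2 ⟨_, hb, eb⟩) (Finset.mem_image.2 ⟨_, ha, ea⟩)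
    (by
      intro x hx n1 n2
      obtain ⟨z, hz, rfl⟩ := Finset.mem_image.1 hx
      have := hL z hz (hne (by rw [ev]; exact n1)) (hne (by rw [ev']; exact n2))
      simp only [Up, Lo, rfl2, LinearMap.coe_mk, AddHom.coe_mk] at *
      linarith)
    (by
      intro x hx n1 n2
      obtain ⟨z, hz, rfl⟩ := Finset.mem_image.1 hx
      have := hU z hz (hne (by rw [ev]; exact n1)) (hne (by rw [ev']; exact n2))
      simp only [Up, Lo, rfl2, LinearMap.coe_mk, AddHom.coe_mk] at *
      linarith)
    (by
      intro x hx n1 n2 n3 n4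
      obtain ⟨z, hz, rfl⟩ := Finset.mem_image.1 hx
      exact h1 z hz (hne (by rw [ev]; exact n1)) (hne (by rw [ev']; exact n2))
        (hne (by rw [ea]; exact n4)) (hne (by rw [eb]; exact n3)))
  refine ⟨-t, by linarith, X'.image rfl2, ?_, ?_, ?_⟩
  · intro x hx
    obtain ⟨z, hz, rfl⟩ := Finset.mem_image.1 hx
    exact Finset.mem_image.2 ⟨-z, hX' z hz, map_neg _ _⟩
  · exact Finset.card_image_le.trans_lt (hc.trans_le Finset.card_image_le)
  · rw [Finset.coe_image, ← LinearMap.image_convexHull, ← he, Finset.coe_image, ← LinearMap.image_convexHull,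
      image_image, image_image]
    congr 1
    ext x
    · simp [phi, rfl2]
    · simp [phi, rfl2, add_comm]

end SP
namespace SP

/-- no point is redundant -/
def Irr (X : Finset (ℝ × ℝ)) : Prop :=
  ∀ w ∈ X, w ∉ convexHull ℝ {z : ℝ × ℝ | z ∈ X ∧ z ≠ w ∧ z ≠ -w}

lemma sym_rem {X : Finset (ℝ × ℝ)} (hX : ∀ x ∈ X, -x ∈ X) (w : ℝ × ℝ) :
    ∀ x ∈ {z : ℝ × ℝ | z ∈ X ∧ z ≠ w ∧ z ≠ -w}, -x ∈ {z : ℝ × ℝ | z ∈ X ∧ z ≠ w ∧ z ≠ -w} := by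
  rintro x ⟨h, h1, h2⟩
  refine ⟨hX x h, fun e => h2 ?_, fun e => h1 ?_⟩
  · rw [← e, neg_neg]
  · simpa using e

lemma norm_step {X : Finset (ℝ × ℝ)} (hX : ∀ x ∈ X, -x ∈ X) (hI : Irr X) {v : ℝ × ℝ}
    (hv : v ∈ X) (ha : ((1, 1) : ℝ × ℝ) ∈ X) (hb : ((1, -1) : ℝ × ℝ) ∈ X)
    (hav : ((1, 1) : ℝ × ℝ) ≠ v) (hav' : ((1, 1) : ℝ × ℝ) ≠ -v)
    (hbv : ((1, -1) : ℝ × ℝ) ≠ v) (hbv' : ((1, -1) : ℝ × ℝ) ≠ -v)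
    (hcone : ∀ w ∈ X, w ≠ v → w ≠ -v → ∃ α γ : ℝ, 0 ≤ α ∧ 0 ≤ γ ∧
      w - v = α • (((1, 1) : ℝ × ℝ) - v) + γ • (((1, -1) : ℝ × ℝ) - v))
    (N : ℕ) {p : ℝ} (hp : 1 ≤ p) {m : ℝ}
    (ih : ∀ X' : Finset (ℝ × ℝ), X'.card < X.card → (∀ x ∈ X', -x ∈ X') →
      mom volume N p (convexHull ℝ (X' : Set (ℝ × ℝ))) ≤ m) :
    mom volume N p (convexHull ℝ (X : Set (ℝ × ℝ))) ≤ m := by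
  obtain ⟨S, y⟩ := v
  have hcone' : ∀ w ∈ X, w ≠ (S, y) → w ≠ -(S, y) → ∃ α γ : ℝ, 0 ≤ α ∧ 0 ≤ γ ∧
      w.1 - S = α * (1 - S) + γ * (1 - S) ∧ w.2 - y = α * (1 - y) + γ * (-1 - y) := by
    intro w hw h1 h2
    obtain ⟨α, γ, h3, h4, h5⟩ := hcone w hw h1 h2
    refine ⟨α, γ, h3, h4, ?_, ?_⟩
    · simpa using congrArg Prod.fst h5
    · simpa using congrArg Prod.snd h5
  have hnn : ∀ {u w : ℝ × ℝ}, u ≠ w → -u ≠ -w := fun h e => h (neg_injective e)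
  have hS : 1 < S := by
    by_contra hS
    push Not at hS
    obtain ⟨α, γ, h3, h4, h5, h6⟩ := hcone' _ (hX _ ha)
      (fun e => hav' (by rw [← e, neg_neg])) (hnn hav)
    simp at h5 h6
    have hS1 : S < 1 := by
      rcases hS.lt_or_eq with h | h
      · exact h
      · rw [h] at h5; norm_num at h5
    have hag : α + γ < 1 := by nlinarith
    refine hI _ (hX _ ha) ?_
    have m1 : ((S, y) : ℝ × ℝ) ∈ convexHull ℝ {z : ℝ × ℝ | z ∈ X ∧ z ≠ -((1, 1) : ℝ × ℝ) ∧ z ≠ - -((1, 1) : ℝ × ℝ)} := by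
      refine subset_convexHull _ _ ⟨hv, fun e => hav' ?_, fun e => hav ?_⟩
      · rw [e, neg_neg]
      · rw [e, neg_neg]
    have m2 : ((1, -1) : ℝ × ℝ) ∈ convexHull ℝ {z : ℝ × ℝ | z ∈ X ∧ z ≠ -((1, 1) : ℝ × ℝ) ∧ z ≠ - -((1, 1) : ℝ × ℝ)} := by
      refine subset_convexHull _ _ ⟨hb, fun e => ?_, fun e => ?_⟩
      · have := congrArg Prod.fst e; norm_num at this
      · have := congrArg Prod.snd e; norm_num at this
    have := abs_mem_hull (sym_rem hX _) m1 m2 (c := (1 - α - γ) / (1 + α)) (d := γ / (1 + α)) (by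
      rw [abs_of_nonneg (div_nonneg (by linarith) (by linarith)),
        abs_of_nonneg (div_nonneg (by linarith) (by linarith)), ← add_div, div_le_one (by linarith)]
      linarith)
    convert this using 1
    have : 1 + α ≠ 0 := by linarith
    ext
    · simp; field_simp; linarith
    · simp; field_simp; linarith
  have hU : ∀ w ∈ X, w ≠ (S, y) → w ≠ -(S, y) → Up S y w := by
    intro w hw h1 h2
    obtain ⟨α, γ, h3, h4, h5, h6⟩ := hcone' w hw h1 h2
    unfold Up
    have e1 : S - w.1 = (α + γ) * (S - 1) := by linarith
    rw [e1, h6]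
    nlinarith [mul_nonneg h4 (sub_nonneg.2 hS.le)]
  have hL : ∀ w ∈ X, w ≠ (S, y) → w ≠ -(S, y) → Lo S y w := by
    intro w hw h1 h2
    obtain ⟨α, γ, h3, h4, h5, h6⟩ := hcone' w hw h1 h2
    unfold Lo
    have e1 : S - w.1 = (α + γ) * (S - 1) := by linarith
    rw [e1, h6]
    nlinarith [mul_nonneg h3 (sub_nonneg.2 hS.le)]
  have h1 : ∀ w ∈ X, w ≠ (S, y) → w ≠ -(S, y) → w ≠ (1, 1) → w ≠ (1, -1) → w.1 < 1 := by
    intro w hw n1 n2 n3 n4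
    by_contra hw1
    push Not at hw1
    obtain ⟨α, γ, h3, h4, h5, h6⟩ := hcone' w hw n1 n2
    have hag : α + γ ≤ 1 := by nlinarith
    refine hI w hw ?_
    have key : ∀ z ∈ X, z ≠ w → z ≠ -w → z ∈ convexHull ℝ {z : ℝ × ℝ | z ∈ X ∧ z ≠ w ∧ z ≠ -w} :=
      fun z h h' h'' => subset_convexHull _ _ ⟨h, h', h''⟩
    have m1 := key _ hv n1.symm (fun e => n2 (by rw [e, neg_neg]))
    have m2 := key _ ha n3.symm (fun e => by
      have := congrArg Prod.fst e; simp at this; linarith)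
    have m3 := key _ hb n4.symm (fun e => by
      have := congrArg Prod.fst e; simp at this; linarith)
    have := (convex_convexHull ℝ {z : ℝ × ℝ | z ∈ X ∧ z ≠ w ∧ z ≠ -w}).sum_mem (t := Finset.univ)
      (w := ![1 - α - γ, α, γ]) (z := ![(S, y), (1, 1), (1, -1)])
      (by intro i _; fin_cases i <;> simp <;> linarith)
      (by simp [Fin.sum_univ_three]; ring)
      (by intro i _; fin_cases i <;> simp [-mem_ofPred_eq] <;> assumption)
    convert this using 1
    ext
    · simp [Fin.sum_univ_three]; linarith
    · simp [Fin.sum_univ_three]; linarith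
  obtain ⟨t2, ht2, X2, s2, c2, e2⟩ := one_sided hX hS hv ha hb hU hL h1
  obtain ⟨t1, ht1, X1, s1, c1, e1⟩ := one_sided' hX hS hv ha hb hU hL h1
  refine mom_step (beta S) (beta_cont S) ht1 ht2 N hp
    (X.finite_toSet.isCompact_convexHull (𝕜 := ℝ)) ?_ ?_
  · rw [e1]; exact ih X1 c1 s1
  · rw [e2]; exact ih X2 c2 s2

/-- determinant -/
def D (u w : ℝ × ℝ) : ℝ := u.1 * w.2 - u.2 * w.1

/-- the linear equivalence sending the basis to `u`, `w` -/
def lin (u w : ℝ × ℝ) (h : D u w ≠ 0) : (ℝ × ℝ) ≃L[ℝ] (ℝ × ℝ) :=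
  LinearEquiv.toContinuousLinearEquiv
  { toFun := fun x => x.1 • u + x.2 • w
    map_add' := by intro x z; ext <;> simp <;> ring
    map_smul' := by intro c x; ext <;> simp <;> ring
    invFun := fun x => (D x w / D u w, D u x / D u w)
    left_inv := by
      intro x
      ext
      · simp; rw [div_eq_iff h]; simp [D]; ring
      · simp; rw [div_eq_iff h]; simp [D]; ring
    right_inv := by
      intro x
      ext
      · simp; field_simp; simp [D]; ring
      · simp; field_simp; simp [D]; ring }

lemma lin_apply (u w : ℝ × ℝ) (h : D u w ≠ 0) (x : ℝ × ℝ) : lin u w h x = x.1 • u + x.2 • w := rfl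

/-- the square -/
def Sq : Set (ℝ × ℝ) := Icc (-1) 1 ×ˢ Icc (-1) 1

end SP
namespace SP

lemma D_smul (u w : ℝ × ℝ) (c : ℝ) : D u (c • w) = c * D u w := by simp [D]; ring
lemma D_add (u w z : ℝ × ℝ) : D u (w + z) = D u w + D u z := by simp [D]; ring
lemma D_sub (u w z : ℝ × ℝ) : D u (w - z) = D u w - D u z := by simp [D]; ring
lemma D_neg (u w : ℝ × ℝ) : D u (-w) = - D u w := by simp [D]; ring
lemma D_self (u : ℝ × ℝ) : D u u = 0 := by simp [D]; ring

lemma vol_zero {X : Finset (ℝ × ℝ)} (h : ∀ u ∈ X, ∀ w ∈ X, D u w = 0) :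
    volume (convexHull ℝ (X : Set (ℝ × ℝ))) = 0 := by
  obtain ⟨v, hv0, hv⟩ : ∃ v : ℝ × ℝ, v ≠ 0 ∧ ∀ w ∈ X, D v w = 0 := by
    by_cases hz : ∃ v ∈ X, v ≠ 0
    · obtain ⟨v, h1, h2⟩ := hz
      exact ⟨v, h2, h v h1⟩
    · push Not at hz
      refine ⟨(1, 0), by simp, fun w hw => ?_⟩
      rw [hz w hw]; simp [D]
  let f : (ℝ × ℝ) →ₗ[ℝ] ℝ :=
    { toFun := D v
      map_add' := D_add v
      map_smul' := fun c x => by simp [D_smul] }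
  have hsub : convexHull ℝ (X : Set (ℝ × ℝ)) ⊆ (LinearMap.ker f : Set (ℝ × ℝ)) := by
    refine convexHull_min ?_ (LinearMap.ker f).convex
    intro w hw
    exact hv w hw
  refine measure_mono_null hsub (Measure.addHaar_submodule _ _ ?_)
  intro htop
  apply hv0
  have h1 : ((1, 0) : ℝ × ℝ) ∈ LinearMap.ker f := by rw [htop]; trivial
  have h2 : ((0, 1) : ℝ × ℝ) ∈ LinearMap.ker f := by rw [htop]; trivial
  have h1 : D v (1, 0) = 0 := h1
  have h2 : D v (0, 1) = 0 := h2
  simp [D] at h1 h2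
  ext
  · exact h2
  · exact h1

lemma removal {X : Finset (ℝ × ℝ)} (hX : ∀ x ∈ X, -x ∈ X) (hI : ¬ Irr X) :
    ∃ X' : Finset (ℝ × ℝ), X'.card < X.card ∧ (∀ x ∈ X', -x ∈ X') ∧
      convexHull ℝ (X : Set (ℝ × ℝ)) = convexHull ℝ (X' : Set (ℝ × ℝ)) := by
  classical
  unfold Irr at hI
  push Not at hI
  obtain ⟨w, hw, hh⟩ := hI
  have hc : ((X.filter fun z => z ≠ w ∧ z ≠ -w : Finset (ℝ × ℝ)) : Set (ℝ × ℝ)) =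
      {z : ℝ × ℝ | z ∈ X ∧ z ≠ w ∧ z ≠ -w} := by ext z; simp
  refine ⟨X.filter fun z => z ≠ w ∧ z ≠ -w, ?_, ?_, ?_⟩
  · refine Finset.card_lt_card (Finset.filter_ssubset.2 ⟨w, hw, by simp⟩)
  · intro x hx
    have := sym_rem hX w x (by rw [← hc]; exact hx)
    rw [← hc] at this; exact this
  · rw [hc]
    apply Subset.antisymm
    · refine convexHull_min ?_ (convex_convexHull _ _)
      intro z hz
      by_cases e1 : z = w
      · rw [e1]; exact hh
      by_cases e2 : z = -w
      · rw [e2]; exact neg_mem_hull (sym_rem hX w) hh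
      exact subset_convexHull _ _ ⟨hz, e1, e2⟩
    · exact convexHull_mono fun z hz => hz.1

lemma exists_cone {X : Finset (ℝ × ℝ)} (hX : ∀ x ∈ X, -x ∈ X) (hI : Irr X) {v w0 : ℝ × ℝ}
    (hv : v ∈ X) (hw0 : w0 ∈ X) (hD : D v w0 ≠ 0) :
    ∃ a ∈ X, ∃ b ∈ X, 0 < D v a ∧ D v b < 0 ∧
      ∀ w ∈ X, w ≠ v → w ≠ -v → ∃ α γ : ℝ, 0 ≤ α ∧ 0 ≤ γ ∧
        w - v = α • (a - v) + γ • (b - v) := by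
  classical
  set Y : Finset (ℝ × ℝ) := X.filter fun z => z ≠ v ∧ z ≠ -v with hY
  have hc : (Y : Set (ℝ × ℝ)) = {z : ℝ × ℝ | z ∈ X ∧ z ≠ v ∧ z ≠ -v} := by ext z; simp [hY]
  have memY : ∀ z, z ∈ Y ↔ z ∈ X ∧ z ≠ v ∧ z ≠ -v := by intro z; simp [hY]
  have hw0Y : w0 ∈ Y := by
    rw [memY]
    refine ⟨hw0, ?_, ?_⟩
    · rintro rfl; exact hD (D_self _)
    · rintro rfl; exact hD (by rw [D_neg, D_self, neg_zero])
  have hnw0Y : -w0 ∈ Y := by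
    have := sym_rem hX v w0 (by rw [← hc]; exact hw0Y)
    rw [← hc] at this; exact this
  obtain ⟨f, u, hf1, hf2⟩ := geometric_hahn_banach_closed_point (convex_convexHull ℝ (Y : Set (ℝ × ℝ)))
    (Y.finite_toSet.isCompact_convexHull (𝕜 := ℝ)).isClosed (by rw [hc]; exact hI v hv)
  have hρ : ∀ w ∈ Y, 0 < f v - f w := by
    intro w hw
    have := hf1 w (subset_convexHull _ _ hw)
    linarith
  have hfv : 0 < f v := by
    have h1 := hρ _ hw0Y
    have h2 := hρ _ hnw0Y
    rw [map_neg] at h2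
    linarith
  let r : ℝ × ℝ → ℝ := fun w => D v w / (f v - f w)
  have hr : ∀ w ∈ Y, D v w = r w * (f v - f w) := fun w hw => (div_mul_cancel₀ _ (hρ w hw).ne').symm
  obtain ⟨a, ha, hamax⟩ := Finset.exists_max_image Y r ⟨_, hw0Y⟩
  obtain ⟨b, hb, hbmin⟩ := Finset.exists_min_image Y r ⟨_, hw0Y⟩
  have hra : 0 < r a ∧ r b < 0 := by
    have h1 := hr _ hw0Y
    have h2 := hr _ hnw0Y
    rw [D_neg] at h2
    have a1 := hamax _ hw0Y
    have a2 := hamax _ hnw0Y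
    have b1 := hbmin _ hw0Y
    have b2 := hbmin _ hnw0Y
    have p1 := hρ _ hw0Y
    have p2 := hρ _ hnw0Y
    rcases lt_or_gt_of_ne hD with h | h
    · have : r w0 < 0 := by by_contra hh; push Not at hh; nlinarith [mul_nonneg hh p1.le]
      have : 0 < r (-w0) := by by_contra hh; push Not at hh; nlinarith [mul_nonneg (neg_nonneg.2 hh) p2.le]
      constructor <;> linarith
    · have : 0 < r w0 := by by_contra hh; push Not at hh; nlinarith [mul_nonneg (neg_nonneg.2 hh) p1.le]
      have : r (-w0) < 0 := by by_contra hh; push Not at hh; nlinarith [mul_nonneg hh p2.le]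
      constructor <;> linarith
  obtain ⟨hra, hrb⟩ := hra
  refine ⟨a, ((memY a).1 ha).1, b, ((memY b).1 hb).1, ?_, ?_, ?_⟩
  · rw [hr a ha]; exact mul_pos hra (hρ a ha)
  · rw [hr b hb]; exact mul_neg_of_neg_of_pos hrb (hρ b hb)
  intro w hw n1 n2
  have hwY : w ∈ Y := (memY w).2 ⟨hw, n1, n2⟩
  have hρa := hρ a ha
  have hρb := hρ b hb
  have hρw := hρ w hwY
  have hrab : 0 < r a - r b := by linarith
  have h1 := hamax w hwY
  have h2 := hbmin w hwY
  set α : ℝ := (f v - f w) * (r w - r b) / ((f v - f a) * (r a - r b)) with hα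
  set γ : ℝ := (f v - f w) * (r a - r w) / ((f v - f b) * (r a - r b)) with hγ
  refine ⟨α, γ, div_nonneg (mul_nonneg hρw.le (by linarith)) (mul_pos hρa hrab).le,
    div_nonneg (mul_nonneg hρw.le (by linarith)) (mul_pos hρb hrab).le, ?_⟩
  have eα : α * (f v - f a) = (f v - f w) * (r w - r b) / (r a - r b) := by
    rw [hα]; field_simp
  have eγ : γ * (f v - f b) = (f v - f w) * (r a - r w) / (r a - r b) := by
    rw [hγ]; field_simp
  clear_value α γ
  rw [← sub_eq_zero]
  set z := w - v - (α • (a - v) + γ • (b - v)) with hz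
  have hfz : f z = 0 := by
    have : f z = -(f v - f w) + (α * (f v - f a) + γ * (f v - f b)) := by
      rw [hz]; simp only [map_sub, map_add, map_smul, smul_eq_mul]; ring
    rw [this, eα, eγ, ← add_div, ← mul_add]
    field_simp; ring
  have hDz : D v z = 0 := by
    have : D v z = D v w - (α * (f v - f a) * r a + γ * (f v - f b) * r b) := by
      rw [hz]; simp only [D_sub, D_add, D_smul, D_self, hr a ha, hr b hb]; ring
    rw [this, eα, eγ, hr w hwY]
    field_simp; ring
  have hf : ∀ x : ℝ × ℝ, f x = x.1 * f (1, 0) + x.2 * f (0, 1) := by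
    intro x
    rw [← smul_eq_mul, ← smul_eq_mul, ← map_smul, ← map_smul, ← map_add]
    congr 1
    ext <;> simp
  clear_value z
  have e1 : f v * z.1 = 0 := by
    have : f v * z.1 = f z * v.1 - f (0, 1) * D v z := by rw [hf v, hf z, D]; ring
    rw [this, hfz, hDz]; ring
  have e2 : f v * z.2 = 0 := by
    have : f v * z.2 = f z * v.2 + f (1, 0) * D v z := by rw [hf v, hf z, D]; ring
    rw [this, hfz, hDz]; ring
  ext
  · exact (mul_eq_zero.1 e1).resolve_left hfv.ne'
  · exact (mul_eq_zero.1 e2).resolve_left hfv.ne'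

lemma para_case {X : Finset (ℝ × ℝ)} (hX : ∀ x ∈ X, -x ∈ X) (hI : Irr X) {v a b : ℝ × ℝ}
    (hv : v ∈ X) (ha : a ∈ X) (hb : b ∈ X) (hDa : 0 < D v a) (hDb : D v b < 0) (hab : D a b = 0)
    (hcone : ∀ w ∈ X, w ≠ v → w ≠ -v → ∃ α γ : ℝ, 0 ≤ α ∧ 0 ≤ γ ∧
        w - v = α • (a - v) + γ • (b - v)) (N : ℕ) (p : ℝ) :
    mom volume N p (convexHull ℝ (X : Set (ℝ × ℝ))) = mom volume N p Sq := by
  have hba : b = -a := by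
    by_contra hne
    have hne2 : b ≠ a := by rintro rfl; linarith
    have hne3 : a ≠ -b := fun h => hne (by rw [h, neg_neg])
    set c := D v b / D v a with hc
    have hc0 : c < 0 := div_neg_of_neg_of_pos hDb hDa
    have hbc : b = c • a := by
      have h0 : a.1 * b.2 - a.2 * b.1 = 0 := hab
      ext
      · simp only [hc, Prod.smul_fst, smul_eq_mul]
        field_simp
        simp only [D]; linear_combination (-v.1) * h0
      · simp only [hc, Prod.smul_snd, smul_eq_mul]
        field_simp
        simp only [D]; linear_combination (-v.2) * h0
    rcases le_or_gt (-1) c with h | h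
    · refine hI b hb ?_
      have m : a ∈ convexHull ℝ {z : ℝ × ℝ | z ∈ X ∧ z ≠ b ∧ z ≠ -b} :=
        subset_convexHull _ _ ⟨ha, hne2.symm, hne3⟩
      have := abs_mem_hull (sym_rem hX b) m m (c := c) (d := 0) (by
        rw [abs_of_neg hc0, abs_zero]; linarith)
      rw [zero_smul, add_zero, ← hbc] at this
      exact this
    · refine hI a ha ?_
      have m : b ∈ convexHull ℝ {z : ℝ × ℝ | z ∈ X ∧ z ≠ a ∧ z ≠ -a} :=
        subset_convexHull _ _ ⟨hb, hne2, hne⟩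
      have := abs_mem_hull (sym_rem hX a) m m (c := c⁻¹) (d := 0) (by
        rw [abs_inv, abs_of_neg hc0, abs_zero, add_zero]
        exact inv_le_one_of_one_le₀ (by linarith))
      rw [zero_smul, add_zero, hbc, smul_smul, inv_mul_cancel₀ hc0.ne, one_smul] at this
      exact this
  subst hba
  have hcone1 : ∀ w ∈ X, w ≠ v → w ≠ -v → |D v w| ≤ D v a - D w a ∧
      w = (D w a / D v a) • v + (D v w / D v a) • a := by
    intro w hw n1 n2
    obtain ⟨α, γ, h1, h2, h3⟩ := hcone w hw n1 n2
    have hw' : w = (1 - α - γ) • v + (α - γ) • a := by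
      rw [sub_eq_iff_eq_add] at h3
      rw [h3]; module
    have e1 : D v w = (α - γ) * D v a := by
      rw [hw', D_add, D_smul, D_smul, D_self]; ring
    have e2 : D w a = (1 - α - γ) * D v a := by
      rw [hw']; simp [D]; ring
    constructor
    · rw [e1, e2, abs_mul, abs_of_pos hDa]
      have : |α - γ| ≤ α + γ := by rw [abs_le]; constructor <;> linarith
      nlinarith
    · rw [e1, e2, mul_div_cancel_right₀ _ hDa.ne', mul_div_cancel_right₀ _ hDa.ne']
      exact hw'
  have hcoord : ∀ w ∈ X, ∃ c d : ℝ, |c| + |d| ≤ 1 ∧ w = c • v + d • a := by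
    intro w hw
    by_cases n1 : w = v
    · exact ⟨1, 0, by simp, by simp [n1]⟩
    by_cases n2 : w = -v
    · exact ⟨-1, 0, by simp, by simp [n2]⟩
    obtain ⟨h1, h2⟩ := hcone1 w hw n1 n2
    obtain ⟨h3, -⟩ := hcone1 (-w) (hX w hw) (fun e => n2 (by rw [← e, neg_neg]))
      (fun e => n1 (neg_injective e))
    rw [D_neg, abs_neg] at h3
    have h4 : D (-w) a = - D w a := by simp [D]; ring
    rw [h4] at h3
    refine ⟨_, _, ?_, h2⟩
    rw [abs_div, abs_div, abs_of_pos hDa, ← add_div, div_le_one hDa]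
    have : |D w a| ≤ D v a - |D v w| := by rw [abs_le]; constructor <;> linarith
    linarith
  have hDD : D ((1 / 2 : ℝ) • (v + a)) ((1 / 2 : ℝ) • (v - a)) ≠ 0 := by
    have : D ((1 / 2 : ℝ) • (v + a)) ((1 / 2 : ℝ) • (v - a)) = - D v a / 2 := by simp [D]; ring
    rw [this]; intro h; linarith
  have hEq : convexHull ℝ (X : Set (ℝ × ℝ)) = lin _ _ hDD '' Sq := by
    apply Subset.antisymm
    · refine convexHull_min ?_ ?_
      · intro w hw
        obtain ⟨c, d, hcd, rfl⟩ := hcoord w hw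
        refine ⟨(c + d, c - d), ?_, ?_⟩
        · have h1 := abs_add_le c d
          have h2 := abs_sub c d
          exact ⟨abs_le.1 (by linarith), abs_le.1 (by linarith)⟩
        · rw [lin_apply]; simp only []; module
      · have : Convex ℝ Sq := (convex_Icc _ _).prod (convex_Icc _ _)
        exact this.linear_image (lin _ _ hDD).toLinearEquiv.toLinearMap
    · rintro _ ⟨⟨s, t⟩, ⟨⟨h1, h2⟩, ⟨h3, h4⟩⟩, rfl⟩
      have := abs_mem_hull (Y := (X : Set (ℝ × ℝ))) hX (subset_convexHull _ _ hv) (subset_convexHull _ _ ha)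
        (c := (s + t) / 2) (d := (s - t) / 2) (by
          simp only at h1 h2 h3 h4
          rcases abs_cases ((s + t) / 2) with h | h <;> rcases abs_cases ((s - t) / 2) with h' | h' <;> linarith)
      convert this using 1
      rw [lin_apply]; simp only []; module
  rw [hEq, mom_linear volume volume]

end SP
namespace SP

lemma gen_case {X : Finset (ℝ × ℝ)} (hX : ∀ x ∈ X, -x ∈ X) (hI : Irr X) {v a b : ℝ × ℝ}
    (hv : v ∈ X) (ha : a ∈ X) (hb : b ∈ X) (hDa : 0 < D v a) (hDb : D v b < 0) (hab : D a b ≠ 0)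
    (hcone : ∀ w ∈ X, w ≠ v → w ≠ -v → ∃ α γ : ℝ, 0 ≤ α ∧ 0 ≤ γ ∧
        w - v = α • (a - v) + γ • (b - v)) (N : ℕ) {p : ℝ} (hp : 1 ≤ p) {m : ℝ}
    (ih : ∀ X' : Finset (ℝ × ℝ), X'.card < X.card → (∀ x ∈ X', -x ∈ X') →
      mom volume N p (convexHull ℝ (X' : Set (ℝ × ℝ))) ≤ m) :
    mom volume N p (convexHull ℝ (X : Set (ℝ × ℝ))) ≤ m := by
  classical
  have hDD : D ((1 / 2 : ℝ) • (a + b)) ((1 / 2 : ℝ) • (a - b)) ≠ 0 := by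
    have : D ((1 / 2 : ℝ) • (a + b)) ((1 / 2 : ℝ) • (a - b)) = - D a b / 2 := by simp [D]; ring
    rw [this]; intro h; apply hab; linarith
  set L := lin _ _ hDD with hL
  have La : L (1, 1) = a := by rw [hL, lin_apply]; simp only []; module
  have Lb : L (1, -1) = b := by rw [hL, lin_apply]; simp only []; module
  set X1 : Finset (ℝ × ℝ) := X.image L.symm with hX1
  have memX1 : ∀ z, z ∈ X1 ↔ L z ∈ X := by
    intro z
    rw [hX1, Finset.mem_image]
    constructor
    · rintro ⟨w, hw, rfl⟩; simpa using hw
    · intro h; exact ⟨_, h, by simp⟩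
  have hX1s : ∀ x ∈ X1, -x ∈ X1 := by
    intro x hx
    rw [memX1] at *
    rw [map_neg]; exact hX _ hx
  have hcard : X1.card ≤ X.card := Finset.card_image_le
  have himg : ∀ s : Set (ℝ × ℝ), L '' convexHull ℝ s = convexHull ℝ (L '' s) := fun s =>
    LinearMap.image_convexHull L.toLinearEquiv.toLinearMap s
  have hmom : mom volume N p (convexHull ℝ (X : Set (ℝ × ℝ))) =
      mom volume N p (convexHull ℝ (X1 : Set (ℝ × ℝ))) := by
    rw [← mom_linear volume volume L N p (convexHull ℝ (X1 : Set (ℝ × ℝ))), himg]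
    congr 2
    ext z
    simp only [mem_image, Finset.mem_coe, memX1]
    constructor
    · intro h; exact ⟨L.symm z, by simpa using h, by simp⟩
    · rintro ⟨x, hx, rfl⟩; exact hx
  have hI1 : Irr X1 := by
    intro w hw hh
    refine hI (L w) ((memX1 w).1 hw) ?_
    have := mem_image_of_mem L hh
    rw [himg] at this
    refine convexHull_mono ?_ this
    rintro _ ⟨z, ⟨h1, h2, h3⟩, rfl⟩
    refine ⟨(memX1 z).1 h1, fun e => h2 (L.injective e), fun e => h3 (L.injective ?_)⟩
    rw [e, map_neg]
  have hne : ∀ {x z : ℝ × ℝ}, L x ≠ L z → x ≠ z := fun h e => h (by rw [e])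
  have Lv : L (L.symm v) = v := by simp
  rw [hmom]
  refine norm_step hX1s hI1 (v := L.symm v) ((memX1 _).2 (by simpa using hv))
    ((memX1 _).2 (by rw [La]; exact ha)) ((memX1 _).2 (by rw [Lb]; exact hb)) (hne ?_) (hne ?_) (hne ?_) (hne ?_)
    ?_ N hp (fun X' h1 h2 => ih X' (h1.trans_le hcard) h2)
  · rw [La, Lv]; rintro rfl; rw [D_self] at hDa; linarith
  · rw [La, map_neg, Lv]; rintro rfl; rw [D_neg, D_self] at hDa; linarith
  · rw [Lb, Lv]; rintro rfl; rw [D_self] at hDb; linarith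
  · rw [Lb, map_neg, Lv]; rintro rfl; rw [D_neg, D_self] at hDb; linarith
  · intro w hw n1 n2
    obtain ⟨α, γ, h1, h2, h3⟩ := hcone (L w) ((memX1 w).1 hw)
      (fun e => n1 (by rw [← e]; simp)) (fun e => n2 (L.injective (by rw [e, map_neg, Lv])))
    refine ⟨α, γ, h1, h2, L.injective ?_⟩
    rw [map_sub, map_add, map_smul, map_smul, map_sub, map_sub, La, Lb, Lv]
    exact h3

lemma finite_case {N : ℕ} (hN : 2 ≤ N) {p : ℝ} (hp : 1 ≤ p) (n : ℕ) : ∀ X : Finset (ℝ × ℝ), X.card = n →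
    (∀ x ∈ X, -x ∈ X) → mom volume N p (convexHull ℝ (X : Set (ℝ × ℝ))) ≤ mom volume N p Sq := by
  induction n using Nat.strong_induction_on with
  | _ n ih =>
    intro X hn hX
    have ih' : ∀ X' : Finset (ℝ × ℝ), X'.card < X.card → (∀ x ∈ X', -x ∈ X') →
      mom volume N p (convexHull ℝ (X' : Set (ℝ × ℝ))) ≤ mom volume N p Sq :=
      fun X' h1 h2 => ih _ (hn ▸ h1) X' rfl h2
    by_cases hI : Irr X
    · by_cases h0 : ∀ u ∈ X, ∀ w ∈ X, D u w = 0
      · rw [mom_null volume hN p (vol_zero h0)]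
        exact mom_nonneg _ _ _ _
      · push Not at h0
        obtain ⟨v, hv, w0, hw0, hD⟩ := h0
        obtain ⟨a, ha, b, hb, hDa, hDb, hcone⟩ := exists_cone hX hI hv hw0 hD
        by_cases hab : D a b = 0
        · exact (para_case hX hI hv ha hb hDa hDb hab hcone N p).le
        · exact gen_case hX hI hv ha hb hDa hDb hab hcone N hp ih'
    · obtain ⟨X', h1, h2, h3⟩ := removal hX hI
      rw [h3]
      exact ih' X' h1 h2

/-- coordinates -/
def L0 : EuclideanSpace ℝ (Fin 2) ≃L[ℝ] (ℝ × ℝ) :=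
  LinearEquiv.toContinuousLinearEquiv
  { toFun := fun x => (x 0, x 1)
    map_add' := by intro x z; ext <;> simp
    map_smul' := by intro c x; ext <;> simp
    invFun := fun x => !₂[x.1, x.2]
    left_inv := by
      intro x
      ext i
      fin_cases i <;> simp
    right_inv := by
      intro x
      ext <;> simp }

lemma L0_sq : L0 '' {x | ∀ i, x i ∈ Set.Icc (-1 : ℝ) 1} = Sq := by
  ext z
  constructor
  · rintro ⟨x, hx, rfl⟩
    exact ⟨hx 0, hx 1⟩
  · rintro ⟨h1, h2⟩
    refine ⟨L0.symm z, ?_, by simp⟩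
    intro i
    fin_cases i
    · exact h1
    · exact h2

lemma momentV_eq (N : ℕ) (hN : 2 ≤ N) (K : Set (EuclideanSpace ℝ (Fin 2))) (p : ℝ) :
    momentV 2 N K p = mom volume N p K := by
  unfold momentV mom
  simp only [hull_eq (by omega : 1 ≤ N)]
  rfl

end SP

/-- For every symmetric convex body `K ⊆ ℝ²`, real `p ≥ 1` and integer `N ≥ 2`,
`𝔼 V_{K, N}^p ≤ 𝔼 V_{𝒫, N}^p`, where `𝒫` is any symmetric parallelogram
(the image of `[-1,1]²` under an invertible linear map). -/
theorem momentV_le_parallelogram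
    (K : Set (EuclideanSpace ℝ (Fin 2))) (hK : IsSymConvexBody K)
    (p : ℝ) (hp : 1 ≤ p) (N : ℕ) (hN : 2 ≤ N)
    (L : EuclideanSpace ℝ (Fin 2) ≃ₗ[ℝ] EuclideanSpace ℝ (Fin 2))
    (P : Set (EuclideanSpace ℝ (Fin 2)))
    (hP : P = L '' {x | ∀ i, x i ∈ Set.Icc (-1 : ℝ) 1}) :
    momentV 2 N K p ≤ momentV 2 N P p := by
  obtain ⟨hcomp, hconv, hint, hsym⟩ := hK
  have hPm : momentV 2 N P p = SP.mom volume N p SP.Sq := by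
    rw [SP.momentV_eq N hN, hP, ← SP.L0_sq, SP.mom_linear volume volume SP.L0]
    exact SP.mom_linear volume volume L.toContinuousLinearEquiv N p _
  rw [hPm, SP.momentV_eq N hN, ← SP.mom_linear volume (volume : Measure (ℝ × ℝ)) SP.L0]
  refine SP.mom_approx N hp (hcomp.image SP.L0.continuous) ?_ ?_ ?_ ?_ ?_
  · exact hconv.linear_image SP.L0.toLinearEquiv.toLinearMap
  · exact (hint.mono interior_subset).image _
  · rintro _ ⟨x, hx, rfl⟩
    refine ⟨-x, ?_, map_neg _ _⟩
    rw [hsym] at hx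
    exact hx
  · have h1 : (interior (SP.L0 '' K)).Nonempty := by
      obtain ⟨x, hx⟩ := hint
      refine ⟨SP.L0 x, ?_⟩
      have := SP.L0.toHomeomorph.image_interior K
      have h2 : SP.L0 '' interior K = interior (SP.L0 '' K) := this
      rw [← h2]
      exact mem_image_of_mem _ hx
    exact (Measure.measure_pos_of_nonempty_interior _ h1).ne'
  · intro X hX
    exact SP.finite_case hN hp _ X rfl hX
end
end
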